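/- arXiv:1504.02625 — 10 statements merged into one kernel-verified Lean document; each statement's English description precedes it below -/
import Mathlib

section
/- Zero is an eigenvalue of infinite multiplicity of the partial integral operator T₁, i.e. the kernel of T₁ is an infinite-dimensional subspace of H. Moreover, a number λ₀ ≠ 0 is an eigenvalue of T₁ if and only if there exists j₀ ∈ {1,…,n} such that the set h_{j₀}⁻¹({λ₀}) = {y ∈ [c,d] : h_{j₀}(y) = λ₀} has positive Lebesgue measure. -/
open MeasureTheory Complex

noncomputable section

/-- The measure on `ℝ` given by restricting Lebesgue measure to `[a,b]`. -/
abbrev muI (a b : ℝ) : MeasureTheory.Measure ℝ :=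
  MeasureTheory.volume.restrict (Set.Icc a b)

section helpers

set_option linter.unusedSectionVars false

variable {μ ν : Measure ℝ} [IsFiniteMeasure μ] [IsFiniteMeasure ν]

theorem hlp_swap {P : ℝ × ℝ → Prop} (hP : ∀ᵐ z ∂(μ.prod ν), P z) :
    ∀ᵐ y ∂ν, ∀ᵐ x ∂μ, P (x, y) := by
  have h1 : ∀ᵐ w ∂(ν.prod μ), P w.swap :=
    (Measure.measurePreserving_swap (μ := ν) (ν := μ)).quasiMeasurePreserving.ae hP
  exact Measure.ae_ae_of_ae_prod h1

theorem hlp_snd {P : ℝ → Prop} (hP : ∀ᵐ y ∂ν, P y) : ∀ᵐ z ∂(μ.prod ν), P z.2 :=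
  Measure.quasiMeasurePreserving_snd.ae hP

theorem hlp_fst {P : ℝ → Prop} (hP : ∀ᵐ y ∂μ, P y) : ∀ᵐ z ∂(μ.prod ν), P z.1 :=
  Measure.quasiMeasurePreserving_fst.ae hP

theorem hlp_tensor {u v : ℝ → ℂ} (hu : MemLp u 2 μ) (hv : MemLp v 2 ν) :
    MemLp (fun z : ℝ × ℝ => u z.1 * v z.2) 2 (μ.prod ν) := by
  have hm : AEStronglyMeasurable (fun z : ℝ × ℝ => u z.1 * v z.2) (μ.prod ν) :=
    hu.1.comp_fst.mul hv.1.comp_snd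
  rw [memLp_two_iff_integrable_sq_norm hm]
  have := ((memLp_two_iff_integrable_sq_norm hu.1).1 hu).mul_prod
    ((memLp_two_iff_integrable_sq_norm hv.1).1 hv)
  simpa [mul_pow] using this

theorem hlp_slice (f : Lp ℂ 2 (μ.prod ν)) :
    ∀ᵐ y ∂ν, MemLp (fun x => f (x, y)) 2 μ := by
  have h1 := (memLp_two_iff_integrable_sq_norm (Lp.memLp f).1).1 (Lp.memLp f)
  filter_upwards [h1.prod_left_ae] with y hy
  refine (memLp_two_iff_integrable_sq_norm ?_).2 hy
  exact ((Lp.stronglyMeasurable f).comp_measurable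
    (measurable_id.prodMk measurable_const)).aestronglyMeasurable

theorem hlp_int {u v : ℝ → ℂ} (hu : MemLp u 2 μ) (hv : MemLp v 2 μ) :
    Integrable (fun x => star (u x) * v x) μ :=
  MemLp.integrable_mul (p := 2) (q := 2) hu.star hv

theorem hlp_expand {n : ℕ} {φ : Fin n → ℝ → ℂ} (hφ : ∀ k, MemLp (φ k) 2 μ)
    (h : Fin n → ℝ) (x : ℝ) {g : ℝ → ℂ} (hg : MemLp g 2 μ) :
    ∫ s, (∑ k, φ k x * star (φ k s) * (h k : ℂ)) * g s ∂μ
      = ∑ k, φ k x * (h k : ℂ) * ∫ s, star (φ k s) * g s ∂μ := by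
  simp_rw [← integral_const_mul]
  rw [← integral_finsetSum _ (fun k _ => (hlp_int (hφ k) hg).const_mul _)]
  congr 1
  ext s
  rw [Finset.sum_mul]
  exact Finset.sum_congr rfl fun k _ => by ring

variable {n : ℕ} {φ : Fin n → ℝ → ℂ} {h : Fin n → ℝ → ℝ}
  {T1 : Lp ℂ 2 (μ.prod ν) →L[ℂ] Lp ℂ 2 (μ.prod ν)}

theorem hlp_T (hφ : ∀ k, MemLp (φ k) 2 μ)
    (hT1 : ∀ f : Lp ℂ 2 (μ.prod ν), ∀ᵐ z ∂(μ.prod ν),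
        T1 f z = ∫ s, (∑ k, φ k z.1 * star (φ k s) * (h k z.2 : ℂ)) * f (s, z.2) ∂μ)
    (f : Lp ℂ 2 (μ.prod ν)) : ∀ᵐ z ∂(μ.prod ν),
        T1 f z = ∑ k, φ k z.1 * (h k z.2 : ℂ) * ∫ s, star (φ k s) * f (s, z.2) ∂μ := by
  filter_upwards [hT1 f, hlp_snd (hlp_slice f)] with z hz h2
  rw [hz]
  exact hlp_expand hφ (fun k => h k z.2) z.1 h2

theorem hlp_T_tensor (hφ : ∀ k, MemLp (φ k) 2 μ)
    (hT1 : ∀ f : Lp ℂ 2 (μ.prod ν), ∀ᵐ z ∂(μ.prod ν),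
        T1 f z = ∫ s, (∑ k, φ k z.1 * star (φ k s) * (h k z.2 : ℂ)) * f (s, z.2) ∂μ)
    {u v : ℝ → ℂ} (hu : MemLp u 2 μ) (hv : MemLp v 2 ν) : ∀ᵐ z ∂(μ.prod ν),
        T1 (hlp_tensor hu hv).toLp z
          = ∑ k, φ k z.1 * (h k z.2 : ℂ) * ((∫ s, star (φ k s) * u s ∂μ) * v z.2) := by
  filter_upwards [hlp_T hφ hT1 (hlp_tensor hu hv).toLp,
    hlp_snd (hlp_swap (hlp_tensor hu hv).coeFn_toLp)] with z hz h2
  rw [hz]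
  refine Finset.sum_congr rfl fun k _ => ?_
  rw [← integral_mul_const]
  congr 1
  refine integral_congr_ae ?_
  filter_upwards [h2] with s hs
  rw [hs, mul_assoc]

theorem hlp_forward (hφ : ∀ k, MemLp (φ k) 2 μ)
    (hφON : ∀ i j, ∫ x, star (φ i x) * φ j x ∂μ = if i = j then 1 else 0)
    (hT1 : ∀ f : Lp ℂ 2 (μ.prod ν), ∀ᵐ z ∂(μ.prod ν),
        T1 f z = ∫ s, (∑ k, φ k z.1 * star (φ k s) * (h k z.2 : ℂ)) * f (s, z.2) ∂μ)
    {lam : ℝ} (hl : lam ≠ 0) (f : Lp ℂ 2 (μ.prod ν)) (hf : T1 f = (lam : ℂ) • f)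
    (hn : ∀ j, ν (h j ⁻¹' {lam}) = 0) : f = 0 := by
  have hlC : (lam : ℂ) ≠ 0 := by exact_mod_cast hl
  have key : ∀ᵐ z ∂(μ.prod ν), (lam : ℂ) * f z
      = ∑ k, φ k z.1 * (h k z.2 : ℂ) * ∫ s, star (φ k s) * f (s, z.2) ∂μ := by
    filter_upwards [hlp_T hφ hT1 f, Lp.coeFn_smul (lam : ℂ) f] with z h1 h2
    rw [← h1, hf, h2]
    rfl
  have hne : ∀ᵐ y ∂ν, ∀ j, h j y ≠ lam := by
    rw [ae_all_iff]
    intro j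
    rw [ae_iff]
    simpa [Set.preimage] using hn j
  have hc : ∀ᵐ y ∂ν, ∀ j, ∫ s, star (φ j s) * f (s, y) ∂μ = 0 := by
    filter_upwards [hlp_swap key, hne] with y hy hny j
    have e : (lam : ℂ) * ∫ s, star (φ j s) * f (s, y) ∂μ
        = (h j y : ℂ) * ∫ s, star (φ j s) * f (s, y) ∂μ := by
      set c : Fin n → ℂ := fun k => ∫ s, star (φ k s) * f (s, y) ∂μ with hcdef
      calc (lam : ℂ) * c j = ∫ s, star (φ j s) * ((lam : ℂ) * f (s, y)) ∂μ := by
            rw [hcdef, ← integral_const_mul]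
            congr 1
            ext s
            ring
        _ = ∫ s, ∑ k, ((h k y : ℂ) * c k) * (star (φ j s) * φ k s) ∂μ := by
            refine integral_congr_ae ?_
            filter_upwards [hy] with s hs
            rw [hs, Finset.mul_sum]
            exact Finset.sum_congr rfl fun k _ => by simp only [hcdef]; ring
        _ = ∑ k, ((h k y : ℂ) * c k) * (if j = k then 1 else 0) := by
            rw [integral_finsetSum _ (fun k _ => (hlp_int (hφ j) (hφ k)).const_mul _)]
            simp_rw [integral_const_mul, hφON]
        _ = (h j y : ℂ) * c j := by simp
    have h3 : ((lam : ℂ) - h j y) * ∫ s, star (φ j s) * f (s, y) ∂μ = 0 := by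
      rw [sub_mul, e, sub_self]
    rcases mul_eq_zero.1 h3 with h4 | h4
    · exact absurd (by exact_mod_cast (sub_eq_zero.1 h4).symm) (hny j)
    · exact h4
  rw [Lp.eq_zero_iff_ae_eq_zero]
  filter_upwards [key, hlp_snd hc] with z h1 h2
  have : (lam : ℂ) * f z = 0 := by
    rw [h1]
    exact Finset.sum_eq_zero fun k _ => by rw [h2 k, mul_zero]
  exact (mul_eq_zero.1 this).resolve_left hlC

theorem hlp_backward (hφ : ∀ k, MemLp (φ k) 2 μ)
    (hφON : ∀ i j, ∫ x, star (φ i x) * φ j x ∂μ = if i = j then 1 else 0)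
    (hhmeas : ∀ k, Measurable (h k))
    (hT1 : ∀ f : Lp ℂ 2 (μ.prod ν), ∀ᵐ z ∂(μ.prod ν),
        T1 f z = ∫ s, (∑ k, φ k z.1 * star (φ k s) * (h k z.2 : ℂ)) * f (s, z.2) ∂μ)
    {lam : ℝ} (j : Fin n) (hj : 0 < ν (h j ⁻¹' {lam})) :
    ∃ f : Lp ℂ 2 (μ.prod ν), f ≠ 0 ∧ T1 f = (lam : ℂ) • f := by
  have hE : MeasurableSet (h j ⁻¹' {lam}) := hhmeas j (measurableSet_singleton _)
  set E := h j ⁻¹' {lam} with hEdef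
  have hv : MemLp (E.indicator (fun _ => (1 : ℂ))) 2 ν :=
    (memLp_const (1 : ℂ)).indicator hE
  refine ⟨(hlp_tensor (hφ j) hv).toLp, ?_, ?_⟩
  · intro h0
    have h1 : ∀ᵐ z ∂(μ.prod ν), φ j z.1 * E.indicator (fun _ => (1 : ℂ)) z.2 = 0 := by
      filter_upwards [(hlp_tensor (hφ j) hv).coeFn_toLp, (Lp.eq_zero_iff_ae_eq_zero).1 h0]
        with z h1 h2
      rw [← h1, h2]
      rfl
    have h2 : ∀ᵐ y ∂ν, y ∉ E := by
      filter_upwards [hlp_swap h1] with y hy hyE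
      have h3 : ∫ x, star (φ j x) * φ j x ∂μ = 0 := by
        rw [← integral_zero ℝ ℂ (μ := μ)]
        refine integral_congr_ae ?_
        filter_upwards [hy] with x hx
        simp only [Set.indicator_of_mem hyE, mul_one] at hx
        rw [hx, mul_zero]
      rw [hφON] at h3
      simp at h3
    rw [ae_iff] at h2
    simp only [not_not] at h2
    exact hj.ne' h2
  · refine Lp.ext ?_
    filter_upwards [hlp_T_tensor hφ hT1 (hφ j) hv, (hlp_tensor (hφ j) hv).coeFn_toLp,
      Lp.coeFn_smul (lam : ℂ) (hlp_tensor (hφ j) hv).toLp] with z h1 h2 h3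
    rw [h1, h3, Pi.smul_apply, h2]
    simp only [hφON, ite_mul, one_mul, zero_mul, mul_ite, mul_zero, Finset.sum_ite_eq',
      Finset.mem_univ, if_true, smul_eq_mul]
    by_cases hz : z.2 ∈ E
    · have : h j z.2 = lam := hz
      rw [this]
      ring
    · simp [Set.indicator_of_notMem hz]

theorem hlp_ker (hφ : ∀ k, MemLp (φ k) 2 μ)
    (hT1 : ∀ f : Lp ℂ 2 (μ.prod ν), ∀ᵐ z ∂(μ.prod ν),
        T1 f z = ∫ s, (∑ k, φ k z.1 * star (φ k s) * (h k z.2 : ℂ)) * f (s, z.2) ∂μ)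
    (hμp : ∀ p : Polynomial ℂ, MemLp (fun x : ℝ => p.eval (x : ℂ)) 2 μ)
    (hνp : ∀ p : Polynomial ℂ, MemLp (fun x : ℝ => p.eval (x : ℂ)) 2 ν)
    (hμ0 : ∀ p : Polynomial ℂ, p ≠ 0 → ∀ᵐ x ∂μ, p.eval ((x : ℝ) : ℂ) ≠ 0)
    (hν0 : ∀ p : Polynomial ℂ, p ≠ 0 → ∀ᵐ x ∂ν, p.eval ((x : ℝ) : ℂ) ≠ 0)
    (hne : μ.prod ν ≠ 0) :
    ¬ FiniteDimensional ℂ ↥(LinearMap.ker T1.toLinearMap) := by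
  have hinf : ¬ FiniteDimensional ℂ (Polynomial ℂ) := Polynomial.not_finite
  let L : Polynomial ℂ →ₗ[ℂ] (Fin n → ℂ) :=
    { toFun := fun p k => ∫ s, star (φ k s) * p.eval (s : ℂ) ∂μ
      map_add' := fun p q => by
        ext k
        simp only [Polynomial.eval_add, mul_add, Pi.add_apply]
        exact integral_add (hlp_int (hφ k) (hμp p)) (hlp_int (hφ k) (hμp q))
      map_smul' := fun r p => by
        ext k
        simp only [Polynomial.eval_smul, smul_eq_mul, RingHom.id_apply, Pi.smul_apply]
        rw [← integral_const_mul]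
        congr 1
        ext s
        ring }
  have hL : ¬ Function.Injective L := fun hi => hinf (FiniteDimensional.of_injective L hi)
  obtain ⟨p, hp, hp0⟩ : ∃ p, L p = 0 ∧ p ≠ 0 := by
    by_contra! hcon
    exact hL ((injective_iff_map_eq_zero L).2 hcon)
  have hpk : ∀ k, ∫ s, star (φ k s) * p.eval (s : ℂ) ∂μ = 0 := fun k => congrFun hp k
  intro hfin
  let M : Polynomial ℂ →ₗ[ℂ] ↥(LinearMap.ker T1.toLinearMap) :=
    { toFun := fun q => ⟨(hlp_tensor (hμp p) (hνp q)).toLp, by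
        rw [LinearMap.mem_ker]
        change T1 _ = 0
        rw [Lp.eq_zero_iff_ae_eq_zero]
        filter_upwards [hlp_T_tensor hφ hT1 (hμp p) (hνp q)] with z hz
        rw [hz]
        exact Finset.sum_eq_zero fun k _ => by rw [hpk k, zero_mul, mul_zero]⟩
      map_add' := fun q r => by
        refine Subtype.ext ?_
        change (hlp_tensor (hμp p) (hνp (q + r))).toLp =
          (hlp_tensor (hμp p) (hνp q)).toLp + (hlp_tensor (hμp p) (hνp r)).toLp
        rw [← MemLp.toLp_add]
        refine MemLp.toLp_congr _ _ (Filter.Eventually.of_forall fun z => ?_)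
        simp [mul_add]
      map_smul' := fun r q => by
        refine Subtype.ext ?_
        change (hlp_tensor (hμp p) (hνp (r • q))).toLp =
          r • (hlp_tensor (hμp p) (hνp q)).toLp
        rw [← MemLp.toLp_const_smul]
        refine MemLp.toLp_congr _ _ (Filter.Eventually.of_forall fun z => ?_)
        simp [mul_left_comm] }
  refine hinf (FiniteDimensional.of_injective M ((injective_iff_map_eq_zero M).2 ?_))
  intro q hq
  by_contra hq0
  have h1 : (hlp_tensor (hμp p) (hνp q)).toLp = 0 := congrArg Subtype.val hq
  have h2 : ∀ᵐ z ∂(μ.prod ν), False := by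
    filter_upwards [(hlp_tensor (hμp p) (hνp q)).coeFn_toLp, (Lp.eq_zero_iff_ae_eq_zero).1 h1,
      hlp_fst (hμ0 p hp0), hlp_snd (hν0 q hq0)] with z h3 h4 h5 h6
    rw [h4] at h3
    exact mul_ne_zero h5 h6 h3.symm
  rw [Filter.eventually_false_iff_eq_bot, ae_eq_bot] at h2
  exact hne h2

theorem hlp_poly (a b : ℝ) (p : Polynomial ℂ) :
    MemLp (fun x : ℝ => p.eval (x : ℂ)) 2 (muI a b) := by
  have hc : Continuous (fun x : ℝ => p.eval (x : ℂ)) :=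
    p.continuous.comp Complex.continuous_ofReal
  obtain ⟨C, hC⟩ := isCompact_Icc.exists_bound_of_continuousOn (hc.continuousOn (s := Set.Icc a b))
  exact MemLp.of_bound hc.aestronglyMeasurable C (ae_restrict_of_forall_mem measurableSet_Icc hC)

theorem hlp_poly0 (a b : ℝ) (p : Polynomial ℂ) (hp : p ≠ 0) :
    ∀ᵐ x ∂(muI a b), p.eval ((x : ℝ) : ℂ) ≠ 0 := by
  refine ae_restrict_of_ae ?_
  rw [ae_iff]
  simp only [not_not]
  refine Set.Finite.measure_zero ?_ _
  have := (p.rootSet_finite ℂ).preimage (f := fun x : ℝ => (x : ℂ))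
    (Complex.ofReal_injective.injOn)
  refine this.subset fun x hx => ?_
  simp only [Set.mem_preimage, Polynomial.mem_rootSet]
  exact ⟨hp, by simpa using hx⟩

end helpers

theorem statement0
    (a b c d : ℝ) (hab : a < b) (hcd : c < d)
    (n : ℕ) (hn : 1 ≤ n)
    (φ : Fin n → ℝ → ℂ)
    (hφL2 : ∀ k, MemLp (φ k) 2 (muI a b))
    (hφON : ∀ i j, ∫ x, star (φ i x) * φ j x ∂(muI a b) = if i = j then 1 else 0)
    (h : Fin n → ℝ → ℝ)
    (hhmeas : ∀ k, Measurable (h k))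
    (hhbdd : ∀ k, ∃ C : ℝ, ∀ᵐ y ∂(muI c d), |h k y| ≤ C)
    (T1 : Lp ℂ 2 ((muI a b).prod (muI c d)) →L[ℂ] Lp ℂ 2 ((muI a b).prod (muI c d)))
    (hT1sa : IsSelfAdjoint T1)
    (hT1 : ∀ f : Lp ℂ 2 ((muI a b).prod (muI c d)),
      ∀ᵐ z ∂((muI a b).prod (muI c d)),
        T1 f z = ∫ s, (∑ k, φ k z.1 * star (φ k s) * (h k z.2 : ℂ)) * f (s, z.2) ∂(muI a b)) :
    ¬ FiniteDimensional ℂ ↥(LinearMap.ker T1.toLinearMap) ∧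
      ∀ lam : ℝ, lam ≠ 0 →
        ((∃ f : Lp ℂ 2 ((muI a b).prod (muI c d)), f ≠ 0 ∧ T1 f = (lam : ℂ) • f) ↔
          ∃ j : Fin n, 0 < muI c d (h j ⁻¹' {lam})) := by
  refine ⟨hlp_ker hφL2 hT1 (hlp_poly a b) (hlp_poly c d) (hlp_poly0 a b) (hlp_poly0 c d) ?_, ?_⟩
  · intro h0
    have h1 := congrArg (fun m => m (Set.univ ×ˢ Set.univ)) h0
    simp only [Measure.prod_prod, Measure.coe_zero, Pi.zero_apply, mul_eq_zero,
      Measure.restrict_apply_univ, Real.volume_Icc, ENNReal.ofReal_eq_zero] at h1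
    rcases h1 with h1 | h1 <;> linarith
  · intro lam hl
    constructor
    · rintro ⟨f, hf0, hf⟩
      by_contra! hcon
      exact hf0 (hlp_forward hφL2 hφON hT1 hl f hf fun j => le_antisymm (hcon j) (zero_le))
    · rintro ⟨j, hj⟩
      exact hlp_backward hφL2 hφON hhmeas hT1 j hj
end
end

section
/- If λ ≠ 0 and λ ∉ ⋃_{k=1}^n Essran(h_k), then the operator T₁ − λE is invertible on H with bounded inverse, and the inverse is given by ((T₁ − λE)⁻¹ f)(x,y) = −(1/λ)·( f(x,y) − Σ_{k=1}^n (h_k(y)/(h_k(y) − λ))·(P_k f)(x,y) ) for all f ∈ H. -/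
open MeasureTheory Complex

noncomputable section

/-- The essential range of a function `φ` with respect to a measure `μ` on `ℝ`:
the set of `l` such that for every `ε > 0` the set `{ξ : l - ε < φ ξ < l + ε}` has
positive measure. -/
def Essran (μ : MeasureTheory.Measure ℝ) (φ : ℝ → ℝ) : Set ℝ :=
  {l : ℝ | ∀ ε > 0, 0 < μ {ξ : ℝ | l - ε < φ ξ ∧ φ ξ < l + ε}}


lemma slice_ae {μ ν : Measure ℝ} [SFinite μ] [SFinite ν] {p : ℝ × ℝ → Prop}
    (hp : ∀ᵐ z ∂(μ.prod ν), p z) : ∀ᵐ z ∂(μ.prod ν), ∀ᵐ s ∂μ, p (s, z.2) := by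
  have h1 : ∀ᵐ z ∂(ν.prod μ), p z.swap :=
    (Measure.measurePreserving_swap (μ := ν) (ν := μ)).quasiMeasurePreserving.ae hp
  have h2 := Measure.ae_ae_of_ae_prod h1
  exact Measure.quasiMeasurePreserving_snd.ae h2

lemma exists_mulOp {μ ν : Measure ℝ} [SFinite μ] [SFinite ν] (g : ℝ → ℂ) (hg : Measurable g)
    (C : ℝ) (hC : ∀ᵐ y ∂ν, ‖g y‖ ≤ C) :
    ∃ M : Lp ℂ 2 (μ.prod ν) →L[ℂ] Lp ℂ 2 (μ.prod ν),
      ∀ f, ∀ᵐ z ∂(μ.prod ν), M f z = g z.2 * f z := by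
  have hm : MemLp (fun z : ℝ × ℝ => g z.2) ⊤ (μ.prod ν) :=
    memLp_top_of_bound (hg.comp measurable_snd).aestronglyMeasurable C
      (Measure.quasiMeasurePreserving_snd.ae hC)
  refine ⟨(ContinuousLinearMap.mul ℂ ℂ).holderL (μ.prod ν) ⊤ 2 2 (hm.toLp _), fun f => ?_⟩
  filter_upwards [(ContinuousLinearMap.mul ℂ ℂ).coeFn_holder (r := 2) (hm.toLp _) f,
    hm.coeFn_toLp] with z h1 h2
  rw [ContinuousLinearMap.holderL_apply_apply, h1, h2]
  rfl

lemma slice_integrable {μ ν : Measure ℝ} [IsFiniteMeasure μ] [IsFiniteMeasure ν] (u : ℝ → ℂ)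
    (hu : MemLp u 2 μ) (f : Lp ℂ 2 (μ.prod ν)) :
    ∀ᵐ z ∂(μ.prod ν), Integrable (fun s => star (u s) * f (s, z.2)) μ := by
  have h1 : MemLp (fun z : ℝ × ℝ => star (u z.1)) 2 (μ.prod ν) :=
    (hu.star).comp_fst ν
  have h2 : Integrable (fun z : ℝ × ℝ => star (u z.1) * f z) (μ.prod ν) :=
    h1.integrable_mul (Lp.memLp f)
  exact Measure.quasiMeasurePreserving_snd.ae h2.prod_left_ae

lemma alg_inv {A : Type*} [Ring A] [Algebra ℂ A] {n : ℕ} (T : A) (P H G : Fin n → A) (l : ℂ)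
    (hl : l ≠ 0) (hT : T = ∑ k, H k * P k)
    (hPH : ∀ j k, P j * H k = H k * P j) (hPG : ∀ j k, P j * G k = G k * P j)
    (hPP : ∀ j k, P j * P k = if j = k then P k else 0)
    (hHG : ∀ k, H k * G k = H k + l • G k) (hGH : ∀ k, G k * H k = H k + l • G k) :
    (T - l • 1) * (-(1 / l) • (1 - ∑ k, G k * P k)) = 1 ∧
    (-(1 / l) • (1 - ∑ k, G k * P k)) * (T - l • 1) = 1 := by
  have key : ∀ U V : Fin n → A, (∀ j k, P j * V k = V k * P j) →
      (∑ k, U k * P k) * (∑ k, V k * P k) = ∑ k, (U k * V k) * P k := by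
    intro U V hV
    rw [Finset.sum_mul_sum]
    refine Finset.sum_congr rfl fun j _ => ?_
    have : ∀ k, U j * P j * (V k * P k) = if j = k then U j * V k * P k else 0 := by
      intro k
      calc U j * P j * (V k * P k) = U j * (P j * V k) * P k := by noncomm_ring
        _ = U j * V k * (P j * P k) := by rw [hV]; noncomm_ring
        _ = _ := by rw [hPP]; split_ifs <;> simp
    simp [this]
  have e1 : T * (∑ k, G k * P k) = T + l • ∑ k, G k * P k := by
    rw [hT, key H G hPG, Finset.smul_sum, ← Finset.sum_add_distrib]
    refine Finset.sum_congr rfl fun k _ => ?_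
    rw [hHG, add_mul, smul_mul_assoc]
  have e2 : (∑ k, G k * P k) * T = T + l • ∑ k, G k * P k := by
    rw [hT, key G H hPH, Finset.smul_sum, ← Finset.sum_add_distrib]
    refine Finset.sum_congr rfl fun k _ => ?_
    rw [hGH, add_mul, smul_mul_assoc]
  generalize (∑ k, G k * P k) = S at e1 e2 ⊢
  have f1 : (T - l • 1) * (1 - S) = (-l) • (1 : A) := by
    rw [sub_mul, mul_sub, e1, smul_mul_assoc, one_mul, mul_one, smul_sub, neg_smul]; abel
  have f2 : (1 - S) * (T - l • 1) = (-l) • (1 : A) := by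
    rw [mul_sub, sub_mul, e2, mul_smul_comm, one_mul, mul_one, smul_sub, neg_smul]; abel
  have hc : -(1 / l) * -l = 1 := by field_simp
  constructor
  · rw [mul_smul_comm, f1, smul_smul, hc, one_smul]
  · rw [smul_mul_assoc, f2, smul_smul, hc, one_smul]

theorem statement1
    (a b c d : ℝ) (hab : a < b) (hcd : c < d)
    (n : ℕ) (hn : 1 ≤ n)
    (φ : Fin n → ℝ → ℂ)
    (hφL2 : ∀ k, MemLp (φ k) 2 (muI a b))
    (hφON : ∀ i j, ∫ x, star (φ i x) * φ j x ∂(muI a b) = if i = j then 1 else 0)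
    (h : Fin n → ℝ → ℝ)
    (hhmeas : ∀ k, Measurable (h k))
    (hhbdd : ∀ k, ∃ C : ℝ, ∀ᵐ y ∂(muI c d), |h k y| ≤ C)
    (T1 : Lp ℂ 2 ((muI a b).prod (muI c d)) →L[ℂ] Lp ℂ 2 ((muI a b).prod (muI c d)))
    (hT1sa : IsSelfAdjoint T1)
    (hT1 : ∀ f : Lp ℂ 2 ((muI a b).prod (muI c d)),
      ∀ᵐ z ∂((muI a b).prod (muI c d)),
        T1 f z = ∫ s, (∑ k, φ k z.1 * star (φ k s) * (h k z.2 : ℂ)) * f (s, z.2) ∂(muI a b))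
    -- the orthogonal projections `P k`
    (P : Fin n → (Lp ℂ 2 ((muI a b).prod (muI c d)) →L[ℂ] Lp ℂ 2 ((muI a b).prod (muI c d))))
    (hP : ∀ k, ∀ f : Lp ℂ 2 ((muI a b).prod (muI c d)),
      ∀ᵐ z ∂((muI a b).prod (muI c d)),
        P k f z = φ k z.1 * ∫ s, star (φ k s) * f (s, z.2) ∂(muI a b))
    (lam : ℝ) (hlam0 : lam ≠ 0) (hlam : lam ∉ ⋃ k, Essran (muI c d) (h k)) :
    ∃ B : Lp ℂ 2 ((muI a b).prod (muI c d)) →L[ℂ] Lp ℂ 2 ((muI a b).prod (muI c d)),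
      (T1 - (lam : ℂ) • 1) * B = 1 ∧ B * (T1 - (lam : ℂ) • 1) = 1 ∧
      ∀ f : Lp ℂ 2 ((muI a b).prod (muI c d)),
        ∀ᵐ z ∂((muI a b).prod (muI c d)),
          B f z = -(1 / (lam : ℂ)) *
            (f z - ∑ k, ((h k z.2 : ℂ) / ((h k z.2 : ℂ) - (lam : ℂ))) * P k f z) := by
  classical
  -- the separation from the essential range
  have hsep : ∀ k, ∃ ε > 0, ∀ᵐ y ∂(muI c d), ε ≤ |h k y - lam| := by
    intro k
    have h1 : lam ∉ Essran (muI c d) (h k) := fun hk => hlam (Set.mem_iUnion.2 ⟨k, hk⟩)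
    simp only [Essran, Set.mem_setOf_eq, not_forall, not_lt, nonpos_iff_eq_zero] at h1
    obtain ⟨ε, hε, h0⟩ := h1
    refine ⟨ε, hε, ?_⟩
    have h2 := measure_eq_zero_iff_ae_notMem.1 h0
    filter_upwards [h2] with y hy
    by_contra hlt
    apply hy
    have := abs_lt.1 (not_le.1 hlt)
    constructor <;> linarith [this.1, this.2]
  have hH : ∀ k, ∃ M : Lp ℂ 2 ((muI a b).prod (muI c d)) →L[ℂ] Lp ℂ 2 ((muI a b).prod (muI c d)),
      ∀ f, ∀ᵐ z ∂((muI a b).prod (muI c d)), M f z = (h k z.2 : ℂ) * f z := by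
    intro k
    obtain ⟨C, hC⟩ := hhbdd k
    refine exists_mulOp (fun y => (h k y : ℂ)) (Complex.measurable_ofReal.comp (hhmeas k)) C ?_
    filter_upwards [hC] with y hy
    simpa using hy
  have hG : ∀ k, ∃ M : Lp ℂ 2 ((muI a b).prod (muI c d)) →L[ℂ] Lp ℂ 2 ((muI a b).prod (muI c d)),
      ∀ f, ∀ᵐ z ∂((muI a b).prod (muI c d)),
        M f z = ((h k z.2 : ℂ) / ((h k z.2 : ℂ) - (lam : ℂ))) * f z := by
    intro k
    obtain ⟨C, hC⟩ := hhbdd k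
    obtain ⟨ε, hε, hs⟩ := hsep k
    have hm : Measurable (fun y => (h k y : ℂ)) := Complex.measurable_ofReal.comp (hhmeas k)
    refine exists_mulOp (fun y => (h k y : ℂ) / ((h k y : ℂ) - (lam : ℂ)))
      (hm.div (hm.sub_const _)) (C / ε) ?_
    filter_upwards [hC, hs] with y hy hy2
    rw [← Complex.ofReal_sub, ← Complex.ofReal_div, Complex.norm_real, Real.norm_eq_abs, abs_div]
    exact div_le_div₀ ((abs_nonneg _).trans hy) hy hε hy2
  choose H hH using hH
  choose G hG using hG
  have hcomm : ∀ (M : Lp ℂ 2 ((muI a b).prod (muI c d)) →L[ℂ] Lp ℂ 2 ((muI a b).prod (muI c d)))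
      (g : ℝ → ℂ), (∀ f, ∀ᵐ z ∂((muI a b).prod (muI c d)), M f z = g z.2 * f z) →
      ∀ j, P j * M = M * P j := by
    intro M g hM j
    ext1 f
    apply Lp.ext
    filter_upwards [hP j (M f), hM (P j f), hP j f, slice_ae (hM f)] with z h1 h2 h3 h4
    rw [ContinuousLinearMap.mul_apply, ContinuousLinearMap.mul_apply, h1, h2, h3]
    have : ∫ s, star (φ j s) * M f (s, z.2) ∂(muI a b)
        = ∫ s, g z.2 * (star (φ j s) * f (s, z.2)) ∂(muI a b) := by
      refine integral_congr_ae ?_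
      filter_upwards [h4] with s hs
      rw [hs]; ring
    rw [this, integral_const_mul]; ring
  have hPP : ∀ j k, P j * P k = if j = k then P k else 0 := by
    intro j k
    ext1 f
    apply Lp.ext
    have h0 : ∀ᵐ z ∂((muI a b).prod (muI c d)),
        (if j = k then P k else 0 : Lp ℂ 2 ((muI a b).prod (muI c d)) →L[ℂ] _) f z
          = if j = k then P k f z else 0 := by
      split_ifs
      · exact Filter.Eventually.of_forall fun _ => rfl
      · exact Lp.coeFn_zero _ _ _
    filter_upwards [hP j (P k f), hP k f, slice_ae (hP k f), h0] with z h1 h2 h3 h4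
    rw [ContinuousLinearMap.mul_apply, h4, h1]
    have : ∫ s, star (φ j s) * P k f (s, z.2) ∂(muI a b)
        = ∫ s, (star (φ j s) * φ k s) * (∫ t, star (φ k t) * f (t, z.2) ∂(muI a b)) ∂(muI a b) := by
      refine integral_congr_ae ?_
      filter_upwards [h3] with s hs
      rw [hs]; ring
    rw [this, integral_mul_const, hφON]
    split_ifs with hjk
    · subst hjk; rw [h2]; ring
    · ring
  have hsum : ∀ (M : Fin n → Lp ℂ 2 ((muI a b).prod (muI c d)) →L[ℂ]
      Lp ℂ 2 ((muI a b).prod (muI c d))) (g : Fin n → ℝ → ℂ),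
      (∀ k f, ∀ᵐ z ∂((muI a b).prod (muI c d)), M k f z = g k z.2 * f z) →
      ∀ f, ∀ᵐ z ∂((muI a b).prod (muI c d)),
        (∑ k, M k * P k) f z = ∑ k, g k z.2 * P k f z := by
    intro M g hM f
    have e : (∑ k, M k * P k) f = ∑ k, M k (P k f) := by
      rw [ContinuousLinearMap.sum_apply]; rfl
    have h1 := Lp.coeFn_fun_finsetSum Finset.univ (fun k => M k (P k f))
    filter_upwards [h1, ae_all_iff.2 fun k => hM k (P k f)] with z h1 h2
    rw [e, h1]
    exact Finset.sum_congr rfl fun k _ => h2 k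
  have hTeq : T1 = ∑ k, H k * P k := by
    ext1 f
    apply Lp.ext
    filter_upwards [hT1 f, hsum H (fun k y => (h k y : ℂ)) hH f, ae_all_iff.2 fun k => hP k f,
      ae_all_iff.2 fun k => slice_integrable (φ k) (hφL2 k) f] with z h1 h2 h3 h4
    rw [h1, h2]
    have : ∀ s, (∑ k, φ k z.1 * star (φ k s) * (h k z.2 : ℂ)) * f (s, z.2)
        = ∑ k, (φ k z.1 * (h k z.2 : ℂ)) * (star (φ k s) * f (s, z.2)) := by
      intro s
      rw [Finset.sum_mul]
      exact Finset.sum_congr rfl fun k _ => by ring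
    simp_rw [this]
    rw [integral_finsetSum _ fun k _ => (h4 k).const_mul _]
    refine Finset.sum_congr rfl fun k _ => ?_
    rw [integral_const_mul, h3 k]; ring
  have hne : ∀ k, ∀ᵐ z ∂((muI a b).prod (muI c d)), (h k z.2 : ℂ) - (lam : ℂ) ≠ 0 := by
    intro k
    obtain ⟨ε, hε, hs⟩ := hsep k
    filter_upwards [Measure.quasiMeasurePreserving_snd.ae hs] with z hz h0
    rw [← Complex.ofReal_sub, Complex.ofReal_eq_zero] at h0
    rw [h0, abs_zero] at hz
    linarith
  have hadd : ∀ k f, ∀ᵐ z ∂((muI a b).prod (muI c d)),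
      (H k + (lam : ℂ) • G k) f z = (H k f z + (lam : ℂ) * G k f z) := by
    intro k f
    filter_upwards [Lp.coeFn_add (H k f) ((lam : ℂ) • G k f),
      Lp.coeFn_smul (lam : ℂ) (G k f)] with z h1 h2
    have e : (H k + (lam : ℂ) • G k) f = H k f + (lam : ℂ) • G k f := rfl
    rw [e, h1, Pi.add_apply, h2]; rfl
  have hHG : ∀ k, H k * G k = H k + (lam : ℂ) • G k := by
    intro k
    ext1 f
    apply Lp.ext
    filter_upwards [hH k (G k f), hG k f, hH k f, hadd k f, hne k] with z h1 h2 h3 h4 h5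
    rw [ContinuousLinearMap.mul_apply, h4, h1, h2, h3]
    field_simp
    ring
  have hGH : ∀ k, G k * H k = H k + (lam : ℂ) • G k := by
    intro k
    ext1 f
    apply Lp.ext
    filter_upwards [hG k (H k f), hG k f, hH k f, hadd k f, hne k] with z h1 h2 h3 h4 h5
    rw [ContinuousLinearMap.mul_apply, h4, h1, h2, h3]
    field_simp
    ring
  obtain ⟨r1, r2⟩ := alg_inv T1 P H G (lam : ℂ) (Complex.ofReal_ne_zero.2 hlam0) hTeq
    (fun j k => hcomm (H k) (fun y => (h k y : ℂ)) (hH k) j)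
    (fun j k => hcomm (G k) (fun y => (h k y : ℂ) / ((h k y : ℂ) - (lam : ℂ))) (hG k) j)
    hPP hHG hGH
  refine ⟨_, r1, r2, fun f => ?_⟩
  have e : (-(1 / (lam : ℂ)) • (1 - ∑ k, G k * P k)) f
      = -(1 / (lam : ℂ)) • (f - (∑ k, G k * P k) f) := rfl
  filter_upwards [Lp.coeFn_smul (-(1 / (lam : ℂ))) (f - (∑ k, G k * P k) f),
    Lp.coeFn_sub f ((∑ k, G k * P k) f),
    hsum G (fun k y => (h k y : ℂ) / ((h k y : ℂ) - (lam : ℂ))) hG f] with z h1 h2 h3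
  rw [e, h1, Pi.smul_apply, h2, Pi.sub_apply, h3, smul_eq_mul]
end
end

section
/- The spectrum of the partial integral operator T₁ is σ(T₁) = {0} ∪ (⋃_{k=1}^n Essran(h_k)). -/
open MeasureTheory Complex

noncomputable section

lemma aux_exists_mul (ν : Measure ℝ) (m : ℝ → ℂ) (hm : MemLp m ⊤ ν) :
    ∃ M : Lp ℂ 2 ν →L[ℂ] Lp ℂ 2 ν, ∀ g : Lp ℂ 2 ν, M g =ᵐ[ν] fun y => m y * g y := by
  refine ⟨(ContinuousLinearMap.mul ℂ ℂ).holderL ν ⊤ 2 2 (hm.toLp m), fun g => ?_⟩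
  have h1 := (ContinuousLinearMap.mul ℂ ℂ).coeFn_holder (r := 2) (hm.toLp m) g
  filter_upwards [h1, hm.coeFn_toLp] with y hy hy2
  simpa [hy2] using hy

lemma aux_memLp_tens {μ ν : Measure ℝ} [SFinite μ] [SFinite ν] {ψ g : ℝ → ℂ}
    (hψ : MemLp ψ 2 μ) (hg : MemLp g 2 ν) :
    MemLp (fun z : ℝ × ℝ => ψ z.1 * g z.2) 2 (μ.prod ν) := by
  rw [memLp_two_iff_integrable_sq_norm]
  · have := ((memLp_two_iff_integrable_sq_norm hψ.1).1 hψ).mul_prod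
      ((memLp_two_iff_integrable_sq_norm hg.1).1 hg)
    refine this.congr (Filter.Eventually.of_forall fun z => ?_)
    simp [mul_pow]
  · exact (hψ.1.comp_fst).mul (hg.1.comp_snd)

lemma aux_inner {μ ν : Measure ℝ} [SFinite μ] [SFinite ν] {ψ ψ' : ℝ → ℂ}
    {g g' : Lp ℂ 2 ν} {F G : Lp ℂ 2 (μ.prod ν)}
    (hF : F =ᵐ[μ.prod ν] fun z => ψ z.1 * g z.2)
    (hG : G =ᵐ[μ.prod ν] fun z => ψ' z.1 * g' z.2) :
    inner ℂ F G = (∫ x, star (ψ x) * ψ' x ∂μ) * inner ℂ g g' := by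
  rw [L2.inner_def, L2.inner_def, ← integral_prod_mul]
  apply integral_congr_ae
  filter_upwards [hF, hG] with z h1 h2
  rw [h1, h2]
  simp
  ring

lemma aux_exists_V {μ : Measure ℝ} (ν : Measure ℝ) [SFinite μ] [SFinite ν] {ψ : ℝ → ℂ}
    (hψ : MemLp ψ 2 μ) :
    ∃ V : Lp ℂ 2 ν →L[ℂ] Lp ℂ 2 (μ.prod ν),
      ∀ g : Lp ℂ 2 ν, V g =ᵐ[μ.prod ν] fun z => ψ z.1 * g z.2 := by
  have key : ∀ g : Lp ℂ 2 ν, (aux_memLp_tens hψ (Lp.memLp g)).toLp _ =ᵐ[μ.prod ν]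
    fun z => ψ z.1 * g z.2 := fun g => MemLp.coeFn_toLp _
  have qs : Measure.QuasiMeasurePreserving Prod.snd (μ.prod ν) ν :=
    Measure.quasiMeasurePreserving_snd
  refine ⟨LinearMap.mkContinuous
    { toFun := fun g => (aux_memLp_tens hψ (Lp.memLp g)).toLp _
      map_add' := ?_
      map_smul' := ?_ } (Real.sqrt ‖∫ x, star (ψ x) * ψ x ∂μ‖) ?_, key⟩
  · intro f g
    apply Lp.ext
    filter_upwards [key f, key g, key (f + g), Lp.coeFn_add (MemLp.toLp _ (aux_memLp_tens hψ (Lp.memLp f)))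
      (MemLp.toLp _ (aux_memLp_tens hψ (Lp.memLp g))), qs.ae (Lp.coeFn_add f g)] with z h1 h2 h3 h4 h5
    rw [h3, h4, Pi.add_apply, h1, h2, h5, Pi.add_apply, mul_add]
  · intro c g
    apply Lp.ext
    filter_upwards [key g, key (c • g), Lp.coeFn_smul c (MemLp.toLp _ (aux_memLp_tens hψ (Lp.memLp g))),
      qs.ae (Lp.coeFn_smul c g)] with z h1 h3 h4 h5
    simp only [RingHom.id_apply]
    rw [h3, h4, Pi.smul_apply, h1, h5, Pi.smul_apply]
    simp only [smul_eq_mul]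
    ring
  · intro g
    have h1 := aux_inner (key g) (key g)
    have h2 := congrArg norm h1
    rw [norm_mul] at h2
    simp only [inner_self_eq_norm_sq_to_K] at h2
    simp only [norm_pow, RCLike.norm_ofReal, abs_norm] at h2
    simp only [LinearMap.coe_mk, AddHom.coe_mk]
    refine le_of_sq_le_sq ?_ (by positivity)
    rw [mul_pow, Real.sq_sqrt (norm_nonneg _)]
    exact h2.le

/-- action of T on tensors -/
lemma aux_T_tens {μ ν : Measure ℝ} [SFinite μ] [SFinite ν] {n : ℕ} {φ : Fin n → ℝ → ℂ}
    (hφ : ∀ k, MemLp (φ k) 2 μ) (h : Fin n → ℝ → ℝ) {ψ : ℝ → ℂ} (hψ : MemLp ψ 2 μ)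
    (g : ℝ → ℂ) (F : ℝ × ℝ → ℂ) (hF : F =ᵐ[μ.prod ν] fun z => ψ z.1 * g z.2) :
    ∀ᵐ z ∂(μ.prod ν),
      ∫ s, (∑ k, φ k z.1 * star (φ k s) * (h k z.2 : ℂ)) * F (s, z.2) ∂μ =
        ∑ k, φ k z.1 * (h k z.2 : ℂ) * g z.2 * ∫ s, star (φ k s) * ψ s ∂μ := by
  have h1 : ∀ᵐ y ∂ν, ∀ᵐ s ∂μ, F (s, y) = ψ s * g y := by
    have := (Measure.measurePreserving_swap (μ := ν) (ν := μ)).quasiMeasurePreserving.ae hF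
    exact Measure.ae_ae_of_ae_prod this
  have qs : Measure.QuasiMeasurePreserving Prod.snd (μ.prod ν) ν :=
    Measure.quasiMeasurePreserving_snd
  filter_upwards [qs.ae h1] with z hz
  have : ∫ s, (∑ k, φ k z.1 * star (φ k s) * (h k z.2 : ℂ)) * F (s, z.2) ∂μ
      = ∫ s, ∑ k, (φ k z.1 * (h k z.2 : ℂ) * g z.2) * (star (φ k s) * ψ s) ∂μ := by
    apply integral_congr_ae
    filter_upwards [hz] with s hs
    rw [hs, Finset.sum_mul]
    exact Finset.sum_congr rfl fun k _ => by ring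
  rw [this, integral_finsetSum]
  · exact Finset.sum_congr rfl fun k _ => integral_const_mul _ _
  · intro k _
    exact (MemLp.integrable_mul (hφ k).star hψ).const_mul _

/-- T kills the orthogonal complement -/
lemma aux_T_zero {μ ν : Measure ℝ} [IsFiniteMeasure μ] [IsFiniteMeasure ν] {n : ℕ} {φ : Fin n → ℝ → ℂ}
    (hφ : ∀ k, MemLp (φ k) 2 μ) (h : Fin n → ℝ → ℝ)
    (F : Lp ℂ 2 (μ.prod ν))
    (horth : ∀ k (g : Lp ℂ 2 ν) (G : Lp ℂ 2 (μ.prod ν)),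
      (G =ᵐ[μ.prod ν] fun z => φ k z.1 * g z.2) → inner ℂ G F = 0) :
    ∀ᵐ z ∂(μ.prod ν),
      ∫ s, (∑ k, φ k z.1 * star (φ k s) * (h k z.2 : ℂ)) * F (s, z.2) ∂μ = 0 := by
  have hint : ∀ k, Integrable (fun z : ℝ × ℝ => star (φ k z.1) * F z) (μ.prod ν) := fun k =>
    MemLp.integrable_mul ((hφ k).star.comp_fst ν) (Lp.memLp F)
  have h1 : ∀ k, ∀ᵐ y ∂ν, Integrable (fun s => star (φ k s) * F (s, y)) μ := fun k =>
    (hint k).prod_left_ae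
  have h2 : ∀ k, ∀ᵐ y ∂ν, ∫ s, star (φ k s) * F (s, y) ∂μ = 0 := by
    intro k
    refine ae_eq_zero_of_forall_setIntegral_eq_of_sigmaFinite
      (fun s _ _ => (hint k).integral_prod_right.integrableOn) ?_
    intro s hs _
    have hg : MemLp (s.indicator fun _ => (1 : ℂ)) 2 ν := memLp_indicator_const 2 hs 1 (by simp)
    have hm := aux_memLp_tens (hφ k) (Lp.memLp (hg.toLp _))
    have := horth k (hg.toLp _) (hm.toLp _) hm.coeFn_toLp
    rw [L2.inner_def] at this
    have qs : Measure.QuasiMeasurePreserving Prod.snd (μ.prod ν) ν :=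
      Measure.quasiMeasurePreserving_snd
    have e : ∫ z, inner ℂ (hm.toLp _ z) (F z) ∂(μ.prod ν) =
        ∫ z, (Prod.snd ⁻¹' s).indicator (fun z : ℝ × ℝ => star (φ k z.1) * F z) z ∂(μ.prod ν) := by
      apply integral_congr_ae
      filter_upwards [hm.coeFn_toLp, qs.ae hg.coeFn_toLp] with z h3 h4
      rw [h3, h4]
      by_cases hz : z.2 ∈ s
      · simp [hz, Set.indicator, mul_comm]
      · simp [hz, Set.indicator]
    rw [e, integral_prod_symm _ ((hint k).indicator (measurable_snd hs))] at this
    rw [← integral_indicator hs, ← this]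
    congr 1
    ext y
    by_cases hy : y ∈ s
    · simp [hy, Set.indicator]
    · simp [hy, Set.indicator]
  have qs : Measure.QuasiMeasurePreserving Prod.snd (μ.prod ν) ν :=
    Measure.quasiMeasurePreserving_snd
  filter_upwards [qs.ae (ae_all_iff.2 h1), qs.ae (ae_all_iff.2 h2)] with z hz1 hz2
  have : ∫ s, (∑ k, φ k z.1 * star (φ k s) * (h k z.2 : ℂ)) * F (s, z.2) ∂μ
      = ∫ s, ∑ k, (φ k z.1 * (h k z.2 : ℂ)) * (star (φ k s) * F (s, z.2)) ∂μ := by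
    congr 1
    ext s
    rw [Finset.sum_mul]
    exact Finset.sum_congr rfl fun k _ => by ring
  rw [this, integral_finsetSum]
  · refine Finset.sum_eq_zero fun k _ => ?_
    rw [integral_const_mul, hz2, mul_zero]
  · intro k _
    exact (hz1 k).const_mul _

lemma aux_algebra {K H : Type*} [NormedAddCommGroup K] [InnerProductSpace ℂ K] [CompleteSpace K]
    [NormedAddCommGroup H] [InnerProductSpace ℂ H] [CompleteSpace H] {n : ℕ}
    (V : Fin n → K →L[ℂ] H) (M N : Fin n → K →L[ℂ] K) (T : H →L[ℂ] H) (l : ℂ) (hl : l ≠ 0)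
    (hV : ∀ i j u, (V i).adjoint (V j u) = if i = j then u else 0)
    (hTV : ∀ k u, T (V k u) = V k (M k u))
    (hT0 : ∀ f, (∀ k, (V k).adjoint f = 0) → T f = 0)
    (hN1 : ∀ k u, l • N k u - M k (N k u) = u)
    (hN2 : ∀ k u, N k (l • u - M k u) = u) : l ∉ spectrum ℂ T := by
  have hT : ∀ f, T f = ∑ k, V k (M k ((V k).adjoint f)) := by
    intro f
    have := hT0 (f - ∑ k, V k ((V k).adjoint f)) (by
      intro k
      simp [map_sub, map_sum, hV])
    rw [map_sub, sub_eq_zero, map_sum] at this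
    simpa [hTV] using this
  rw [spectrum.notMem_iff]
  set R : H →L[ℂ] H := l⁻¹ • (1 - ∑ k, V k ∘L (V k).adjoint) + ∑ k, V k ∘L N k ∘L (V k).adjoint
    with hR
  have hRf : ∀ f, R f = l⁻¹ • (f - ∑ k, V k ((V k).adjoint f)) + ∑ k, V k (N k ((V k).adjoint f)) := by
    intro f; simp [hR]
  have hVR : ∀ k f, (V k).adjoint (R f) = N k ((V k).adjoint f) := by
    intro k f
    rw [hRf]
    simp [map_add, map_sum, hV]
  have hVT : ∀ k f, (V k).adjoint (T f) = M k ((V k).adjoint f) := by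
    intro k f
    rw [hT]
    simp [map_sum, hV]
  have hA : ∀ f, (algebraMap ℂ (H →L[ℂ] H) l - T) f = l • f - T f := by
    intro f; simp [Algebra.algebraMap_eq_smul_one]
  refine ⟨⟨algebraMap ℂ (H →L[ℂ] H) l - T, R, ?_, ?_⟩, rfl⟩
  · ext1 f
    change (algebraMap ℂ (H →L[ℂ] H) l - T) (R f) = f
    rw [hA, hT]
    simp only [hVR]
    rw [hRf, smul_add, smul_smul, mul_inv_cancel₀ hl, one_smul, Finset.smul_sum, add_sub_assoc,
      ← Finset.sum_sub_distrib]
    have key : ∀ k u, l • V k (N k u) - V k (M k (N k u)) = V k u := by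
      intro k u
      rw [← map_smul, ← map_sub, hN1]
    simp only [key]
    simp
  · ext1 f
    change R ((algebraMap ℂ (H →L[ℂ] H) l - T) f) = f
    rw [hA, hRf]
    simp only [map_sub (ContinuousLinearMap.adjoint _), map_smul (ContinuousLinearMap.adjoint _), hVT, hN2]
    rw [hT f]
    simp only [map_sub, map_smul, Finset.sum_sub_distrib, ← Finset.smul_sum]
    rw [sub_sub, add_sub_cancel, ← smul_sub, smul_smul, inv_mul_cancel₀ hl]
    simp

lemma aux_not_essran (ν : Measure ℝ) (h : ℝ → ℝ) (l : ℂ)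
    (hl : l ∉ (fun r : ℝ => (r : ℂ)) '' Essran ν h) :
    ∃ δ > 0, ∀ᵐ y ∂ν, δ ≤ ‖l - (h y : ℂ)‖ := by
  by_cases him : l.im = 0
  · have hre : l.re ∉ Essran ν h := fun hh => hl ⟨l.re, hh, by apply Complex.ext <;> simp [him]⟩
    simp only [Essran, Set.mem_ofPred_eq, not_forall, not_lt, nonpos_iff_eq_zero] at hre
    obtain ⟨δ, hδ, h0⟩ := hre
    refine ⟨δ, hδ, ?_⟩
    have : ∀ᵐ y ∂ν, ¬ (l.re - δ < h y ∧ h y < l.re + δ) := by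
      rw [ae_iff]; simpa using h0
    filter_upwards [this] with y hy
    have h1 := Complex.abs_re_le_norm (l - (h y : ℂ))
    simp only [Complex.sub_re, Complex.ofReal_re] at h1
    refine le_trans ?_ h1
    by_contra! hc
    rw [abs_lt] at hc
    exact hy ⟨by linarith, by linarith⟩
  · refine ⟨|l.im|, by positivity, Filter.Eventually.of_forall fun y => ?_⟩
    have h1 := Complex.abs_im_le_norm (l - (h y : ℂ))
    simpa using h1

lemma aux_exists_orth {a b : ℝ} (hab : a < b) {n : ℕ} (φ : Fin n → ℝ → ℂ)
    (hφ : ∀ k, MemLp (φ k) 2 (muI a b)) :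
    ∃ ψ : ℝ → ℂ, MemLp ψ 2 (muI a b) ∧ (∀ k, ∫ s, star (φ k s) * ψ s ∂(muI a b) = 0) ∧
      ¬ (ψ =ᵐ[muI a b] 0) := by
  have hmem : ∀ p : Polynomial ℂ, MemLp (fun x : ℝ => p.eval (x : ℂ)) 2 (muI a b) := by
    intro p
    have hc : Continuous (fun x : ℝ => p.eval (x : ℂ)) := by fun_prop
    obtain ⟨C, hC⟩ := (isCompact_Icc (a := a) (b := b)).exists_bound_of_continuousOn hc.continuousOn
    refine MemLp.of_bound hc.aestronglyMeasurable C ?_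
    exact (ae_restrict_iff' measurableSet_Icc).2 (Filter.Eventually.of_forall hC)
  have hi : ∀ k (p : Polynomial ℂ),
      Integrable (fun s : ℝ => star (φ k s) * p.eval (s : ℂ)) (muI a b) := fun k p =>
    MemLp.integrable_mul (hφ k).star (hmem p)
  let L : Polynomial ℂ →ₗ[ℂ] (Fin n → ℂ) :=
    { toFun := fun p k => ∫ s : ℝ, star (φ k s) * p.eval (s : ℂ) ∂(muI a b)
      map_add' := fun p q => by
        ext k
        simp only [Polynomial.eval_add, mul_add, Pi.add_apply]
        exact integral_add (hi k p) (hi k q)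
      map_smul' := fun c p => by
        ext k
        simp only [Polynomial.eval_smul, Pi.smul_apply, smul_eq_mul, RingHom.id_apply]
        rw [← integral_const_mul]
        congr 1; ext s; ring }
  let D := Polynomial.degreeLTEquiv ℂ (n + 1)
  let L' : (Fin (n + 1) → ℂ) →ₗ[ℂ] (Fin n → ℂ) :=
    L ∘ₗ (Polynomial.degreeLT ℂ (n + 1)).subtype ∘ₗ D.symm.toLinearMap
  have hker : LinearMap.ker L' ≠ ⊥ := LinearMap.ker_ne_bot_of_finrank_lt (by simp)
  obtain ⟨v, hv, hv0⟩ := Submodule.exists_mem_ne_zero_of_ne_bot hker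
  set p : Polynomial ℂ := (D.symm v : Polynomial ℂ) with hp
  have hp0 : p ≠ 0 := by
    intro h0
    apply hv0
    rw [hp, ZeroMemClass.coe_eq_zero] at h0
    simpa using h0
  refine ⟨fun x => p.eval (x : ℂ), hmem p, fun k => congrFun hv k, ?_⟩
  intro h0
  have hfin : {x : ℝ | p.eval (x : ℂ) = 0}.Finite := by
    have := Polynomial.finite_setOfPred_isRoot hp0
    exact this.preimage (Complex.ofReal_injective.injOn)
  have h1 : muI a b {x : ℝ | p.eval (x : ℂ) = 0} = 0 := hfin.measure_zero _
  have h2 : muI a b {x : ℝ | p.eval (x : ℂ) = 0}ᶜ = 0 := h0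
  have h3 : muI a b Set.univ = 0 := by
    rw [← Set.union_compl_self {x : ℝ | p.eval (x : ℂ) = 0}]
    exact measure_union_null h1 h2
  simp at h3
  linarith

lemma aux_below {H : Type*} [NormedAddCommGroup H] [InnerProductSpace ℂ H] (T : H →L[ℂ] H)
    (l : ℂ) (hl : l ∉ spectrum ℂ T) : ∃ C > 0, ∀ f, ‖f‖ ≤ C * ‖l • f - T f‖ := by
  rw [spectrum.notMem_iff] at hl
  obtain ⟨u, hu⟩ := hl
  set R : H →L[ℂ] H := ((u⁻¹ : (H →L[ℂ] H)ˣ) : H →L[ℂ] H) with hR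
  refine ⟨‖R‖ + 1, by positivity, fun f => ?_⟩
  have h1 : R (l • f - T f) = f := by
    have h2 : l • f - T f = (u : H →L[ℂ] H) f := by
      rw [hu]; simp [Algebra.algebraMap_eq_smul_one]
    have h3 : R * (u : H →L[ℂ] H) = 1 := Units.inv_mul u
    rw [h2]
    exact congrArg (fun A : H →L[ℂ] H => A f) h3
  calc ‖f‖ = ‖R (l • f - T f)‖ := by rw [h1]
    _ ≤ ‖R‖ * ‖l • f - T f‖ := ContinuousLinearMap.le_opNorm _ _
    _ ≤ _ := by gcongr; linarith

theorem statement2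
    (a b c d : ℝ) (hab : a < b) (hcd : c < d)
    (n : ℕ) (hn : 1 ≤ n)
    (φ : Fin n → ℝ → ℂ)
    (hφL2 : ∀ k, MemLp (φ k) 2 (muI a b))
    (hφON : ∀ i j, ∫ x, star (φ i x) * φ j x ∂(muI a b) = if i = j then 1 else 0)
    (h : Fin n → ℝ → ℝ)
    (hhmeas : ∀ k, Measurable (h k))
    (hhbdd : ∀ k, ∃ C : ℝ, ∀ᵐ y ∂(muI c d), |h k y| ≤ C)
    (T1 : Lp ℂ 2 ((muI a b).prod (muI c d)) →L[ℂ] Lp ℂ 2 ((muI a b).prod (muI c d)))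
    (hT1sa : IsSelfAdjoint T1)
    (hT1 : ∀ f : Lp ℂ 2 ((muI a b).prod (muI c d)),
      ∀ᵐ z ∂((muI a b).prod (muI c d)),
        T1 f z = ∫ s, (∑ k, φ k z.1 * star (φ k s) * (h k z.2 : ℂ)) * f (s, z.2) ∂(muI a b)) :
    spectrum ℂ T1 = {0} ∪ ⋃ k : Fin n, (fun r : ℝ => (r : ℂ)) '' Essran (muI c d) (h k) := by
  have qs : Measure.QuasiMeasurePreserving Prod.snd ((muI a b).prod (muI c d)) (muI c d) :=
    Measure.quasiMeasurePreserving_snd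
  choose V hV using fun k => aux_exists_V (muI c d) (hφL2 k)
  have hMem : ∀ k, MemLp (fun y => (h k y : ℂ)) ⊤ (muI c d) := by
    intro k
    obtain ⟨C, hC⟩ := hhbdd k
    refine memLp_top_of_bound
      (Complex.measurable_ofReal.comp (hhmeas k)).aestronglyMeasurable C ?_
    filter_upwards [hC] with y hy
    simpa using hy
  choose M hM using fun k => aux_exists_mul (muI c d) _ (hMem k)
  have hVin : ∀ i j u v, inner ℂ (V i u) (V j v) = (if i = j then 1 else 0) * inner ℂ u v := by
    intro i j u v
    rw [aux_inner (hV i u) (hV j v), hφON]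
  have hTV : ∀ k u, T1 (V k u) = V k (M k u) := by
    intro k u
    apply Lp.ext
    filter_upwards [hT1 (V k u), aux_T_tens hφL2 h (hφL2 k) u (V k u) (hV k u), hV k (M k u),
      qs.ae (hM k u)] with z h1 h2 h3 h4
    rw [h1, h2, h3, h4]
    simp only [hφON]
    simp
    ring
  have hVnorm : ∀ k u, ‖V k u‖ = ‖u‖ := by
    intro k u
    have h1 := hVin k k u u
    have h2 := congrArg norm h1
    rw [if_pos rfl, one_mul] at h2
    simp only [inner_self_eq_norm_sq_to_K] at h2
    simp only [norm_pow, RCLike.norm_ofReal, abs_norm] at h2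
    exact (sq_eq_sq₀ (norm_nonneg _) (norm_nonneg _)).1 h2
  have hVadj : ∀ i j u, (V i).adjoint (V j u) = if i = j then u else 0 := by
    intro i j u
    refine ext_inner_left ℂ fun w => ?_
    rw [ContinuousLinearMap.adjoint_inner_right, hVin]
    split_ifs <;> simp
  have hT0 : ∀ f, (∀ k, (V k).adjoint f = 0) → T1 f = 0 := by
    intro f hf
    apply Lp.ext
    have := aux_T_zero hφL2 h f (by
      intro k g G hG
      have : G = V k g := Lp.ext (hG.trans (hV k g).symm)
      rw [this, ← ContinuousLinearMap.adjoint_inner_right, hf, inner_zero_right])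
    filter_upwards [hT1 f, this, Lp.coeFn_zero ℂ 2 ((muI a b).prod (muI c d))] with z h1 h2 h3
    rw [h1, h2, h3]
    rfl
  have hbelow : ∀ l : ℂ, l ∉ spectrum ℂ T1 → ∃ C > 0, ∀ f, ‖f‖ ≤ C * ‖l • f - T1 f‖ :=
    aux_below T1
  apply Set.Subset.antisymm
  · intro l hl
    by_contra hcon
    simp only [Set.mem_union, Set.mem_singleton_iff, Set.mem_iUnion, not_or, not_exists] at hcon
    obtain ⟨hl0, hcon⟩ := hcon
    choose δ hδ hδ2 using fun k => aux_not_essran (muI c d) (h k) l (hcon k)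
    have hNmem : ∀ k, MemLp (fun y => (l - (h k y : ℂ))⁻¹) ⊤ (muI c d) := by
      intro k
      refine memLp_top_of_bound
        (measurable_const.sub (Complex.measurable_ofReal.comp (hhmeas k))).inv.aestronglyMeasurable
        (δ k)⁻¹ ?_
      filter_upwards [hδ2 k] with y hy
      rw [norm_inv]
      exact inv_anti₀ (hδ k) hy
    choose N hN using fun k => aux_exists_mul (muI c d) _ (hNmem k)
    refine aux_algebra V M N T1 l hl0 hVadj hTV hT0 ?_ ?_ hl
    · intro k u
      apply Lp.ext
      filter_upwards [Lp.coeFn_sub (l • N k u) (M k (N k u)), Lp.coeFn_smul l (N k u), hN k u,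
        hM k (N k u), hδ2 k] with y h1 h2 h3 h4 h5
      have h6 : l - (h k y : ℂ) ≠ 0 := norm_pos_iff.1 ((hδ k).trans_le h5)
      rw [h1, Pi.sub_apply, h2, Pi.smul_apply, h4, h3, smul_eq_mul, ← sub_mul,
        mul_inv_cancel_left₀ h6]
    · intro k u
      apply Lp.ext
      filter_upwards [Lp.coeFn_sub (l • u) (M k u), Lp.coeFn_smul l u, hM k u,
        hN k (l • u - M k u), hδ2 k] with y h1 h2 h3 h4 h5
      have h6 : l - (h k y : ℂ) ≠ 0 := norm_pos_iff.1 ((hδ k).trans_le h5)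
      rw [h4, h1, Pi.sub_apply, h2, Pi.smul_apply, h3, smul_eq_mul, ← sub_mul,
        inv_mul_cancel_left₀ h6]
  · intro l hl
    by_contra hcon
    obtain ⟨C, hC, hbd⟩ := hbelow l hcon
    rcases hl with hl | hl
    · rw [Set.mem_singleton_iff] at hl
      subst hl
      obtain ⟨ψ, hψ, hψ0, hψne⟩ := aux_exists_orth hab φ hφL2
      have h1 : MemLp (fun _ : ℝ => (1 : ℂ)) 2 (muI c d) := memLp_const 1
      have hm := aux_memLp_tens hψ h1
      have h2 : T1 (hm.toLp _) = 0 := by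
        apply Lp.ext
        filter_upwards [hT1 (hm.toLp _), aux_T_tens hφL2 h hψ (fun _ => 1) _ hm.coeFn_toLp,
          Lp.coeFn_zero ℂ 2 ((muI a b).prod (muI c d))] with z h1 h2 h3
        rw [h1, h2, h3]
        simp only [hψ0]
        simp
      have h3 := hbd (hm.toLp _)
      rw [h2] at h3
      simp only [zero_smul, sub_zero, norm_zero, mul_zero] at h3
      have h4 : hm.toLp _ = 0 := norm_le_zero_iff.1 h3
      have h5 : (fun z : ℝ × ℝ => ψ z.1 * 1) =ᵐ[(muI a b).prod (muI c d)] 0 :=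
        hm.coeFn_toLp.symm.trans (h4 ▸ Lp.coeFn_zero ℂ 2 _)
      have h6 := Measure.ae_ae_of_ae_prod h5
      apply hψne
      have : Filter.NeBot (ae (muI c d)) := by
        rw [ae_neBot]
        intro h0
        have h7 : muI c d Set.univ = 0 := by rw [h0]; rfl
        simp at h7
        linarith
      filter_upwards [h6] with x hx
      obtain ⟨y, hy⟩ := hx.exists
      simpa using hy
    · rw [Set.mem_iUnion] at hl
      obtain ⟨k, r, hr, rfl⟩ := hl
      have hε : 0 < 1 / (2 * C) := by positivity
      have hpos := hr _ hε
      set E : Set ℝ := {ξ : ℝ | r - 1 / (2 * C) < h k ξ ∧ h k ξ < r + 1 / (2 * C)} with hE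
      have hEm : MeasurableSet E :=
        (measurableSet_lt measurable_const (hhmeas k)).inter
          (measurableSet_lt (hhmeas k) measurable_const)
      have hg : MemLp (E.indicator fun _ => (1 : ℂ)) 2 (muI c d) :=
        memLp_indicator_const 2 hEm 1 (Or.inr (measure_ne_top _ _))
      set g := hg.toLp _ with hgdef
      have hg0 : g ≠ 0 := by
        intro h0
        rw [hgdef] at h0
        have h1 : (E.indicator fun _ => (1 : ℂ)) =ᵐ[muI c d] 0 :=
          hg.coeFn_toLp.symm.trans (h0 ▸ Lp.coeFn_zero ℂ 2 _)
        have h2 : ∀ᵐ y ∂(muI c d), y ∉ E := by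
          filter_upwards [h1] with y hy hyE
          simp [hyE] at hy
        rw [ae_iff] at h2
        simp only [not_not] at h2
        exact hpos.ne' h2
      have h1 := hbd (V k g)
      rw [hTV, ← map_smul, ← map_sub, hVnorm, hVnorm] at h1
      have h2 : ‖(r : ℂ) • g - M k g‖ ≤ 1 / (2 * C) * ‖g‖ := by
        apply Lp.norm_le_mul_norm_of_ae_le_mul
        filter_upwards [Lp.coeFn_sub ((r : ℂ) • g) (M k g), Lp.coeFn_smul (r : ℂ) g, hM k g,
          hg.coeFn_toLp] with y h1 h2 h3 h4
        rw [h1, Pi.sub_apply, h2, Pi.smul_apply, h3, smul_eq_mul, ← sub_mul, norm_mul]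
        by_cases hy : y ∈ E
        · gcongr
          rw [← Complex.ofReal_sub, Complex.norm_real, Real.norm_eq_abs, abs_le]
          exact ⟨by linarith [hy.2], by linarith [hy.1]⟩
        · rw [h4, Set.indicator_of_notMem hy]
          simp
      have h3 : 0 < ‖g‖ := norm_pos_iff.2 hg0
      have h4 : ‖g‖ ≤ C * (1 / (2 * C) * ‖g‖) := h1.trans (by gcongr)
      have h5 : C * (1 / (2 * C) * ‖g‖) = ‖g‖ / 2 := by field_simp
      linarith
end
end

section
/- Every eigenvalue of the partial integral operator T₁ has infinite multiplicity: for every λ ∈ ℝ, if the eigenspace ker(T₁ − λE) is nonzero, then it is infinite-dimensional. -/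
open MeasureTheory Complex

noncomputable section

/-- Multiplication by `arctan y`, a bounded injective function of the second variable. -/
theorem memLp_arctan_mul (μ ν : Measure ℝ) (f : Lp ℂ 2 (μ.prod ν)) :
    MemLp (fun z : ℝ × ℝ => (Real.arctan z.2 : ℂ) * f z) 2 (μ.prod ν) := by
  have hg : MemLp (fun z : ℝ × ℝ => (Real.arctan z.2 : ℂ)) ⊤ (μ.prod ν) := by
    refine memLp_top_of_bound (C := Real.pi / 2) ?_ ?_
    · exact (Measurable.aestronglyMeasurable (by fun_prop))
    · refine Filter.Eventually.of_forall fun z => ?_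
      rw [Complex.norm_real, Real.norm_eq_abs, abs_le]
      exact ⟨(Real.neg_pi_div_two_lt_arctan _).le, (Real.arctan_lt_pi_div_two _).le⟩
  exact (Lp.memLp f).smul hg

/-- The multiplication operator on `L²`. -/
def arctanMul (μ ν : Measure ℝ) : Lp ℂ 2 (μ.prod ν) →ₗ[ℂ] Lp ℂ 2 (μ.prod ν) where
  toFun f := (memLp_arctan_mul μ ν f).toLp _
  map_add' f g := by
    apply Lp.ext
    filter_upwards [(memLp_arctan_mul μ ν (f + g)).coeFn_toLp,
      (memLp_arctan_mul μ ν f).coeFn_toLp, (memLp_arctan_mul μ ν g).coeFn_toLp,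
      Lp.coeFn_add f g,
      Lp.coeFn_add ((memLp_arctan_mul μ ν f).toLp _) ((memLp_arctan_mul μ ν g).toLp _)]
      with z h1 h2 h3 h4 h5
    rw [h1, h5, Pi.add_apply, h2, h3, h4, Pi.add_apply]
    ring
  map_smul' r f := by
    apply Lp.ext
    filter_upwards [(memLp_arctan_mul μ ν (r • f)).coeFn_toLp,
      (memLp_arctan_mul μ ν f).coeFn_toLp,
      Lp.coeFn_smul r f,
      Lp.coeFn_smul r ((memLp_arctan_mul μ ν f).toLp _)]
      with z h1 h2 h4 h5
    rw [h1, RingHom.id_apply, h5, Pi.smul_apply, h2, h4, Pi.smul_apply, smul_eq_mul, smul_eq_mul]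
    ring

theorem arctanMul_coe (μ ν : Measure ℝ) (f : Lp ℂ 2 (μ.prod ν)) :
    ∀ᵐ z ∂(μ.prod ν), arctanMul μ ν f z = (Real.arctan z.2 : ℂ) * f z :=
  (memLp_arctan_mul μ ν f).coeFn_toLp

theorem arctanMul_no_eigen (μ ν : Measure ℝ) [SFinite μ] [SFinite ν] [NullSingletonClass ν]
    (f : Lp ℂ 2 (μ.prod ν)) (r : ℂ) (hf : arctanMul μ ν f = r • f) : f = 0 := by
  have hS : ν {y : ℝ | (Real.arctan y : ℂ) = r} = 0 := by
    apply Set.Subsingleton.measure_zero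
    intro x hx y hy
    have : (Real.arctan x : ℂ) = Real.arctan y := Eq.trans hx (Eq.symm hy)
    exact Real.arctan_injective (by exact_mod_cast this)
  have hS' : ∀ᵐ y ∂ν, (Real.arctan y : ℂ) ≠ r := by
    rw [ae_iff]; simpa using hS
  have h3 := (Measure.quasiMeasurePreserving_snd (μ := μ) (ν := ν)).ae hS'
  apply Lp.ext
  filter_upwards [arctanMul_coe μ ν f, h3, Lp.coeFn_smul r f,
    Lp.coeFn_zero ℂ 2 (μ.prod ν)] with z h1 h2 h4 h5
  rw [h5, Pi.zero_apply]
  rw [hf, h4, Pi.smul_apply, smul_eq_mul] at h1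
  have h6 : ((Real.arctan z.2 : ℂ) - r) * f z = 0 := by rw [sub_mul, h1, sub_self]
  exact (mul_eq_zero.mp h6).resolve_left (sub_ne_zero.mpr h2)

theorem arctanMul_comm (μ ν : Measure ℝ) [SFinite μ] [SFinite ν]
    (K : ℝ × ℝ → ℝ → ℂ)
    (T : Lp ℂ 2 (μ.prod ν) →L[ℂ] Lp ℂ 2 (μ.prod ν))
    (hT : ∀ f : Lp ℂ 2 (μ.prod ν), ∀ᵐ z ∂(μ.prod ν), T f z = ∫ s, K z s * f (s, z.2) ∂μ)
    (f : Lp ℂ 2 (μ.prod ν)) : T (arctanMul μ ν f) = arctanMul μ ν (T f) := by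
  have h0 : ∀ᵐ y ∂ν, ∀ᵐ s ∂μ, arctanMul μ ν f (s, y) = (Real.arctan y : ℂ) * f (s, y) := by
    have := (Measure.measurePreserving_swap (μ := ν) (ν := μ)).quasiMeasurePreserving.ae
      (arctanMul_coe μ ν f)
    exact Measure.ae_ae_of_ae_prod this
  have h1 := (Measure.quasiMeasurePreserving_snd (μ := μ) (ν := ν)).ae h0
  apply Lp.ext
  filter_upwards [h1, hT f, hT (arctanMul μ ν f), arctanMul_coe μ ν (T f)] with z h1 h2 h3 h4
  rw [h3, h4, h2, ← integral_const_mul]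
  apply integral_congr_ae
  filter_upwards [h1] with s hs
  rw [hs]
  ring

theorem statement3
    (a b c d : ℝ) (hab : a < b) (hcd : c < d)
    (n : ℕ) (hn : 1 ≤ n)
    (φ : Fin n → ℝ → ℂ)
    (hφL2 : ∀ k, MemLp (φ k) 2 (muI a b))
    (hφON : ∀ i j, ∫ x, star (φ i x) * φ j x ∂(muI a b) = if i = j then 1 else 0)
    (h : Fin n → ℝ → ℝ)
    (hhmeas : ∀ k, Measurable (h k))
    (hhbdd : ∀ k, ∃ C : ℝ, ∀ᵐ y ∂(muI c d), |h k y| ≤ C)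
    (T1 : Lp ℂ 2 ((muI a b).prod (muI c d)) →L[ℂ] Lp ℂ 2 ((muI a b).prod (muI c d)))
    (hT1sa : IsSelfAdjoint T1)
    (hT1 : ∀ f : Lp ℂ 2 ((muI a b).prod (muI c d)),
      ∀ᵐ z ∂((muI a b).prod (muI c d)),
        T1 f z = ∫ s, (∑ k, φ k z.1 * star (φ k s) * (h k z.2 : ℂ)) * f (s, z.2) ∂(muI a b)) :
    ∀ lam : ℝ,
      LinearMap.ker (T1 - (lam : ℂ) • (1 : Lp ℂ 2 ((muI a b).prod (muI c d)) →L[ℂ]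
          Lp ℂ 2 ((muI a b).prod (muI c d)))).toLinearMap ≠ ⊥ →
      ¬ FiniteDimensional ℂ
        ↥(LinearMap.ker (T1 - (lam : ℂ) • (1 : Lp ℂ 2 ((muI a b).prod (muI c d)) →L[ℂ]
          Lp ℂ 2 ((muI a b).prod (muI c d)))).toLinearMap) := by
  intro lam hne hfin
  set V := LinearMap.ker (T1 - (lam : ℂ) • (1 : Lp ℂ 2 ((muI a b).prod (muI c d)) →L[ℂ]
          Lp ℂ 2 ((muI a b).prod (muI c d)))).toLinearMap with hV
  have hmem : ∀ f, f ∈ V ↔ T1 f = (lam : ℂ) • f := by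
    intro f
    rw [hV, LinearMap.mem_ker]
    exact sub_eq_zero
  have hinv : ∀ f ∈ V, arctanMul (muI a b) (muI c d) f ∈ V := by
    intro f hf
    rw [hmem] at hf ⊢
    rw [arctanMul_comm (muI a b) (muI c d)
      (fun z s => ∑ k, φ k z.1 * star (φ k s) * (h k z.2 : ℂ)) T1 hT1 f, hf, map_smul]
  have : Nontrivial V := Submodule.nontrivial_iff_ne_bot.mpr hne
  obtain ⟨r, hr⟩ := Module.End.exists_eigenvalue
    ((arctanMul (muI a b) (muI c d)).restrict hinv : Module.End ℂ V)
  obtain ⟨v, hv⟩ := hr.exists_hasEigenvector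
  have h1 := hv.apply_eq_smul
  have h2 := arctanMul_no_eigen (muI a b) (muI c d) (v : Lp ℂ 2 ((muI a b).prod (muI c d))) r
    (congrArg Subtype.val h1)
  exact hv.2 (Subtype.ext h2)
end
end

section
/- The discrete spectrum of the partial integral operator T₁ is empty: σ_disc(T₁) = ∅. -/
open MeasureTheory Complex

noncomputable section

/-- The discrete spectrum of a bounded operator: the set of isolated points of the
spectrum which are eigenvalues of finite multiplicity. -/
def discreteSpectrum {E : Type*} [NormedAddCommGroup E] [NormedSpace ℂ E]
    (T : E →L[ℂ] E) : Set ℂ :=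
  {z : ℂ | z ∈ spectrum ℂ T ∧ nhdsWithin z (spectrum ℂ T \ {z}) = ⊥ ∧
    LinearMap.ker ((T - z • (1 : E →L[ℂ] E) : E →L[ℂ] E) : E →ₗ[ℂ] E) ≠ ⊥ ∧
    FiniteDimensional ℂ ↥(LinearMap.ker ((T - z • (1 : E →L[ℂ] E) : E →L[ℂ] E) : E →ₗ[ℂ] E))}

theorem exists_mulY (a b c d : ℝ) :
    ∃ M : Lp ℂ 2 ((muI a b).prod (muI c d)) →ₗ[ℂ] Lp ℂ 2 ((muI a b).prod (muI c d)),
      ∀ f, ∀ᵐ z ∂((muI a b).prod (muI c d)), M f z = (z.2 : ℂ) * f z := by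
  have hg : MemLp (fun z : ℝ × ℝ => (z.2 : ℂ)) ⊤ ((muI a b).prod (muI c d)) := by
    refine memLp_top_of_bound (by fun_prop) (max |c| |d|) ?_
    have h1 : ∀ᵐ y : ℝ ∂(muI c d), ‖(y : ℂ)‖ ≤ max |c| |d| := by
      filter_upwards [ae_restrict_mem measurableSet_Icc] with y hy
      rw [Complex.norm_real]
      exact abs_le_max_abs_abs hy.1 hy.2
    exact Measure.quasiMeasurePreserving_snd.ae h1
  refine ⟨(ContinuousLinearMap.mul ℂ ℂ).holderₗ _ ⊤ 2 2 hg.toLp, fun f => ?_⟩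
  filter_upwards [(ContinuousLinearMap.mul ℂ ℂ).coeFn_holder (r := 2) hg.toLp f,
    hg.coeFn_toLp] with z h1 h2
  rw [ContinuousLinearMap.holderₗ_apply_apply, h1, h2]
  rfl

theorem ae_slice (a b c d : ℝ) {p : ℝ × ℝ → Prop}
    (hp : ∀ᵐ z ∂((muI a b).prod (muI c d)), p z) :
    ∀ᵐ z ∂((muI a b).prod (muI c d)), ∀ᵐ s ∂(muI a b), p (s, z.2) := by
  have h1 : ∀ᵐ z ∂((muI c d).prod (muI a b)), p z.swap :=
    (Measure.measurePreserving_swap (μ := muI c d) (ν := muI a b)).quasiMeasurePreserving.ae hp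
  exact Measure.quasiMeasurePreserving_snd.ae (Measure.ae_ae_of_ae_prod h1)

theorem statement4
    (a b c d : ℝ) (hab : a < b) (hcd : c < d)
    (n : ℕ) (hn : 1 ≤ n)
    (φ : Fin n → ℝ → ℂ)
    (hφL2 : ∀ k, MemLp (φ k) 2 (muI a b))
    (hφON : ∀ i j, ∫ x, star (φ i x) * φ j x ∂(muI a b) = if i = j then 1 else 0)
    (h : Fin n → ℝ → ℝ)
    (hhmeas : ∀ k, Measurable (h k))
    (hhbdd : ∀ k, ∃ C : ℝ, ∀ᵐ y ∂(muI c d), |h k y| ≤ C)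
    (T1 : Lp ℂ 2 ((muI a b).prod (muI c d)) →L[ℂ] Lp ℂ 2 ((muI a b).prod (muI c d)))
    (hT1sa : IsSelfAdjoint T1)
    (hT1 : ∀ f : Lp ℂ 2 ((muI a b).prod (muI c d)),
      ∀ᵐ z ∂((muI a b).prod (muI c d)),
        T1 f z = ∫ s, (∑ k, φ k z.1 * star (φ k s) * (h k z.2 : ℂ)) * f (s, z.2) ∂(muI a b)) :
    discreteSpectrum T1 = ∅ := by
  obtain ⟨M, hM⟩ := exists_mulY a b c d
  have hcomm : ∀ f, T1 (M f) = M (T1 f) := by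
    intro f
    apply Lp.ext
    filter_upwards [hT1 (M f), hM (T1 f), hT1 f, ae_slice a b c d (hM f)] with z h1 h2 h3 h4
    rw [h1, h2, h3, ← integral_const_mul]
    apply integral_congr_ae
    filter_upwards [h4] with s hs
    rw [hs]
    ring
  rw [Set.eq_empty_iff_forall_notMem]
  rintro w ⟨-, -, hne, hfin⟩
  have hmem : ∀ f, f ∈ LinearMap.ker ((T1 - w • (1 : _ →L[ℂ] _) :
      Lp ℂ 2 ((muI a b).prod (muI c d)) →L[ℂ] Lp ℂ 2 ((muI a b).prod (muI c d))) :
      Lp ℂ 2 ((muI a b).prod (muI c d)) →ₗ[ℂ] Lp ℂ 2 ((muI a b).prod (muI c d))) ↔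
      T1 f = w • f := by
    intro f
    rw [LinearMap.mem_ker]
    change T1 f - w • f = 0 ↔ _
    exact sub_eq_zero
  generalize LinearMap.ker ((T1 - w • (1 : _ →L[ℂ] _) :
      Lp ℂ 2 ((muI a b).prod (muI c d)) →L[ℂ] Lp ℂ 2 ((muI a b).prod (muI c d))) :
      Lp ℂ 2 ((muI a b).prod (muI c d)) →ₗ[ℂ] Lp ℂ 2 ((muI a b).prod (muI c d))) = V at *
  have hinv : ∀ f ∈ V, M f ∈ V := by
    intro f hf
    rw [hmem] at hf ⊢
    rw [hcomm, hf, map_smul]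
  have : Nontrivial V := Submodule.nontrivial_iff_ne_bot.mpr hne
  obtain ⟨μ, hμ⟩ := Module.End.exists_eigenvalue (M.restrict hinv)
  obtain ⟨v, hv⟩ := hμ.exists_hasEigenvector
  have hv1 : M (v : Lp ℂ 2 ((muI a b).prod (muI c d))) = μ • (v : Lp ℂ 2 _) :=
    congrArg Subtype.val hv.apply_eq_smul
  apply hv.2
  apply Subtype.ext
  apply Lp.ext
  have hnull : ∀ᵐ y ∂(muI c d), y ≠ μ.re :=
    Measure.ae_ne _ _
  filter_upwards [hM v, Lp.coeFn_smul μ (v : Lp ℂ 2 ((muI a b).prod (muI c d))),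
    Measure.quasiMeasurePreserving_snd.ae hnull,
    Lp.coeFn_zero ℂ 2 ((muI a b).prod (muI c d))] with z h1 h2 h3 h4
  rw [hv1, h2, Pi.smul_apply, smul_eq_mul] at h1
  refine Eq.trans ?_ h4.symm
  have h5 : (μ - (z.2 : ℂ)) * (v : Lp ℂ 2 ((muI a b).prod (muI c d))) z = 0 := by
    rw [sub_mul, h1, sub_self]
  refine (mul_eq_zero.mp h5).resolve_left fun h6 => h3 ?_
  have := congrArg Complex.re h6
  simp at this
  linarith
end
end

section
/- If every function h_k, k ∈ {1,…,n}, is continuous and strictly monotone on [c,d], then the partial integral operator T₁ has no eigenvalue different from zero. -/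
open MeasureTheory Complex

noncomputable section

theorem fiber_zero {n : ℕ} (μ : Measure ℝ) (φ : Fin n → ℝ → ℂ)
    (hφL2 : ∀ k, MemLp (φ k) 2 μ)
    (hφON : ∀ i j, ∫ x, star (φ i x) * φ j x ∂μ = if i = j then 1 else 0)
    (η : Fin n → ℂ) (lam : ℂ) (hlam : lam ≠ 0) (hη : ∀ k, η k ≠ lam)
    (g : ℝ → ℂ) (hg : MemLp g 2 μ)
    (he : ∀ᵐ x ∂μ, lam * g x = ∫ s, (∑ k, φ k x * star (φ k s) * η k) * g s ∂μ) :
    ∀ᵐ x ∂μ, g x = 0 := by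
  have hi : ∀ k, Integrable (fun s => star (φ k s) * g s) μ := fun k =>
    MemLp.integrable_mul (hφL2 k).star hg
  have hi2 : ∀ j k, Integrable (fun s => star (φ j s) * φ k s) μ := fun j k =>
    MemLp.integrable_mul (hφL2 j).star (hφL2 k)
  set C : Fin n → ℂ := fun k => ∫ s, star (φ k s) * g s ∂μ with hC
  have he' : ∀ᵐ x ∂μ, lam * g x = ∑ k, (η k * C k) * φ k x := by
    filter_upwards [he] with x hx
    rw [hx]
    have : ∀ s, (∑ k, φ k x * star (φ k s) * η k) * g s
        = ∑ k, (φ k x * η k) * (star (φ k s) * g s) := by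
      intro s
      rw [Finset.sum_mul]
      exact Finset.sum_congr rfl fun k _ => by ring
    simp_rw [this]
    rw [integral_finsetSum _ fun k _ => (hi k).const_mul _]
    refine Finset.sum_congr rfl fun k _ => ?_
    rw [integral_const_mul]
    simp only [hC]
    ring
  have hz : ∀ j, C j = 0 := by
    intro j
    have h1 : lam * C j = η j * C j := by
      calc lam * C j = ∫ s, star (φ j s) * (lam * g s) ∂μ := by
            simp only [hC]
            rw [← integral_const_mul]
            congr 1; ext s; ring
        _ = ∫ s, ∑ k, (η k * C k) * (star (φ j s) * φ k s) ∂μ := by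
            apply integral_congr_ae
            filter_upwards [he'] with s hs
            rw [hs, Finset.mul_sum]
            exact Finset.sum_congr rfl fun k _ => by ring
        _ = ∑ k, (η k * C k) * (if j = k then 1 else 0) := by
            rw [integral_finsetSum _ fun k _ => (hi2 j k).const_mul _]
            refine Finset.sum_congr rfl fun k _ => ?_
            rw [integral_const_mul, hφON]
        _ = η j * C j := by simp
    by_contra h0
    exact hη j (mul_right_cancel₀ h0 h1).symm
  filter_upwards [he'] with x hx
  simpa [hz, hlam] using hx

theorem statement5
    (a b c d : ℝ) (hab : a < b) (hcd : c < d)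
    (n : ℕ) (hn : 1 ≤ n)
    (φ : Fin n → ℝ → ℂ)
    (hφL2 : ∀ k, MemLp (φ k) 2 (muI a b))
    (hφON : ∀ i j, ∫ x, star (φ i x) * φ j x ∂(muI a b) = if i = j then 1 else 0)
    (h : Fin n → ℝ → ℝ)
    (hhmeas : ∀ k, Measurable (h k))
    (hhbdd : ∀ k, ∃ C : ℝ, ∀ᵐ y ∂(muI c d), |h k y| ≤ C)
    (T1 : Lp ℂ 2 ((muI a b).prod (muI c d)) →L[ℂ] Lp ℂ 2 ((muI a b).prod (muI c d)))
    (hT1sa : IsSelfAdjoint T1)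
    (hT1 : ∀ f : Lp ℂ 2 ((muI a b).prod (muI c d)),
      ∀ᵐ z ∂((muI a b).prod (muI c d)),
        T1 f z = ∫ s, (∑ k, φ k z.1 * star (φ k s) * (h k z.2 : ℂ)) * f (s, z.2) ∂(muI a b))
    (hhcont : ∀ k, ContinuousOn (h k) (Set.Icc c d))
    (hhmono : ∀ k, StrictMonoOn (h k) (Set.Icc c d) ∨ StrictAntiOn (h k) (Set.Icc c d)) :
    ∀ lam : ℂ, lam ≠ 0 →
      ¬ ∃ f : Lp ℂ 2 ((muI a b).prod (muI c d)), f ≠ 0 ∧ T1 f = lam • f := by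
  rintro lam hlam ⟨f, hf0, hf⟩
  apply hf0
  have hfm : StronglyMeasurable (f : ℝ × ℝ → ℂ) := Lp.stronglyMeasurable f
  have hf2 : Integrable (fun z => ‖f z‖ ^ 2) ((muI a b).prod (muI c d)) :=
    (memLp_two_iff_integrable_sq_norm hfm.aestronglyMeasurable).1 (Lp.memLp f)
  have hfib : ∀ᵐ y ∂(muI c d), MemLp (fun x => f (x, y)) 2 (muI a b) := by
    filter_upwards [hf2.prod_left_ae] with y hy
    exact (memLp_two_iff_integrable_sq_norm
      (hfm.comp_measurable measurable_prodMk_right).aestronglyMeasurable).2 hy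
  have heq : ∀ᵐ z ∂((muI a b).prod (muI c d)), lam * f z =
      ∫ s, (∑ k, φ k z.1 * star (φ k s) * (h k z.2 : ℂ)) * f (s, z.2) ∂(muI a b) := by
    have h2 := hT1 f
    rw [hf] at h2
    filter_upwards [h2, Lp.coeFn_smul lam f] with z hz hz2
    rw [← hz, hz2]; rfl
  have heq' := Measure.ae_ae_of_ae_prod
    ((Measure.measurePreserving_swap (μ := muI c d) (ν := muI a b)).quasiMeasurePreserving.ae heq)
  have hne : ∀ᵐ y ∂(muI c d), ∀ k, (h k y : ℂ) ≠ lam := by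
    rw [ae_all_iff]
    intro k
    have hinj : Set.InjOn (h k) (Set.Icc c d) := (hhmono k).elim (·.injOn) (·.injOn)
    rw [ae_restrict_iff' measurableSet_Icc, ae_iff]
    apply Set.Subsingleton.measure_zero
    intro x hx y hy
    simp only [Set.mem_ofPred_eq, Classical.not_imp, not_not] at hx hy
    exact hinj hx.1 hy.1 (by exact_mod_cast hx.2.trans hy.2.symm)
  have hzero : ∀ᵐ y ∂(muI c d), ∀ᵐ x ∂(muI a b), f (x, y) = 0 := by
    filter_upwards [hfib, heq', hne] with y h1 h2 h3
    exact fiber_zero (muI a b) φ hφL2 hφON (fun k => (h k y : ℂ)) lam hlam h3 _ h1 h2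
  have hms : MeasurableSet {z : ℝ × ℝ | f z = 0} :=
    hfm.measurable (measurableSet_singleton 0)
  have hms' : MeasurableSet {z : ℝ × ℝ | f z.swap = 0} := measurable_swap hms
  have hz1 : ∀ᵐ z ∂((muI c d).prod (muI a b)), f z.swap = 0 :=
    (Measure.ae_prod_iff_ae_ae hms').2 hzero
  have hz2 : ∀ᵐ z ∂((muI a b).prod (muI c d)), f z = 0 := by
    have := (Measure.measurePreserving_swap (μ := muI a b)
      (ν := muI c d)).quasiMeasurePreserving.ae hz1
    simpa using this
  exact (Lp.eq_zero_iff_ae_eq_zero).2 hz2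
end
end

section
/- If λ ≠ 0 and λ ∉ ⋃_{j=1}^m Essran(p_j), then the operator T₂ − λE is invertible on H with bounded inverse, and the inverse is given by ((T₂ − λE)⁻¹ f)(x,y) = −(1/λ)·( f(x,y) − Σ_{j=1}^m (p_j(x)/(p_j(x) − λ))·(Q_j f)(x,y) ) for all f ∈ H. -/
open MeasureTheory Complex

noncomputable section

lemma exists_mulOp_s6 {a b c d : ℝ} (g : ℝ → ℂ) (hg : Measurable g)
    (hb : ∃ C : ℝ, ∀ᵐ x ∂(muI a b), ‖g x‖ ≤ C) :
    ∃ M : Lp ℂ 2 ((muI a b).prod (muI c d)) →L[ℂ] Lp ℂ 2 ((muI a b).prod (muI c d)),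
      ∀ f, ∀ᵐ z ∂((muI a b).prod (muI c d)), M f z = g z.1 * f z := by
  obtain ⟨C, hC⟩ := hb
  have hG : MemLp (fun z : ℝ × ℝ => g z.1) ⊤ ((muI a b).prod (muI c d)) := by
    refine memLp_top_of_bound (hg.comp measurable_fst).aestronglyMeasurable C ?_
    exact Measure.quasiMeasurePreserving_fst.ae hC
  refine ⟨(ContinuousLinearMap.mul ℂ ℂ).holderL ((muI a b).prod (muI c d)) ⊤ 2 2 (hG.toLp _), ?_⟩
  intro f
  have h1 := (ContinuousLinearMap.mul ℂ ℂ).coeFn_holder (r := 2) (hG.toLp _) f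
  filter_upwards [h1, hG.coeFn_toLp] with z h1 h2
  rw [← h2]
  exact h1

lemma section_memLp {a b c d : ℝ} (f : Lp ℂ 2 ((muI a b).prod (muI c d))) :
    ∀ᵐ x ∂(muI a b), MemLp (fun t => f (x, t)) 2 (muI c d) := by
  have hm := Lp.memLp f
  have h1 := (memLp_two_iff_integrable_sq_norm hm.1).1 hm
  filter_upwards [h1.prod_right_ae, hm.1.prodMk_left] with x h2 h3
  exact (memLp_two_iff_integrable_sq_norm h3).2 h2

theorem statement6
    (a b c d : ℝ) (hab : a < b) (hcd : c < d)
    (m : ℕ) (hm : 1 ≤ m)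
    (ψ : Fin m → ℝ → ℂ)
    (hψL2 : ∀ j, MemLp (ψ j) 2 (muI c d))
    (hψON : ∀ i j, ∫ y, star (ψ i y) * ψ j y ∂(muI c d) = if i = j then 1 else 0)
    (p : Fin m → ℝ → ℝ)
    (hpmeas : ∀ j, Measurable (p j))
    (hpbdd : ∀ j, ∃ C : ℝ, ∀ᵐ x ∂(muI a b), |p j x| ≤ C)
    (T2 : Lp ℂ 2 ((muI a b).prod (muI c d)) →L[ℂ] Lp ℂ 2 ((muI a b).prod (muI c d)))
    (hT2sa : IsSelfAdjoint T2)
    (hT2 : ∀ f : Lp ℂ 2 ((muI a b).prod (muI c d)),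
      ∀ᵐ z ∂((muI a b).prod (muI c d)),
        T2 f z = ∫ t, (∑ j, (p j z.1 : ℂ) * ψ j z.2 * star (ψ j t)) * f (z.1, t) ∂(muI c d))
    -- the orthogonal projections `Q j`
    (Q : Fin m → (Lp ℂ 2 ((muI a b).prod (muI c d)) →L[ℂ] Lp ℂ 2 ((muI a b).prod (muI c d))))
    (hQ : ∀ j, ∀ f : Lp ℂ 2 ((muI a b).prod (muI c d)),
      ∀ᵐ z ∂((muI a b).prod (muI c d)),
        Q j f z = ψ j z.2 * ∫ t, star (ψ j t) * f (z.1, t) ∂(muI c d))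
    (lam : ℝ) (hlam0 : lam ≠ 0) (hlam : lam ∉ ⋃ j, Essran (muI a b) (p j)) :
    ∃ B : Lp ℂ 2 ((muI a b).prod (muI c d)) →L[ℂ] Lp ℂ 2 ((muI a b).prod (muI c d)),
      (T2 - (lam : ℂ) • 1) * B = 1 ∧ B * (T2 - (lam : ℂ) • 1) = 1 ∧
      ∀ f : Lp ℂ 2 ((muI a b).prod (muI c d)),
        ∀ᵐ z ∂((muI a b).prod (muI c d)),
          B f z = -(1 / (lam : ℂ)) *
            (f z - ∑ j, ((p j z.1 : ℂ) / ((p j z.1 : ℂ) - (lam : ℂ))) * Q j f z) := by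
  classical
  have hgap : ∀ j, ∃ ε : ℝ, 0 < ε ∧ ∀ᵐ x ∂(muI a b), ε ≤ |p j x - lam| := by
    intro j
    have h : lam ∉ Essran (muI a b) (p j) := fun h => hlam (Set.mem_iUnion.2 ⟨j, h⟩)
    simp only [Essran, Set.mem_setOf_eq, not_forall, not_lt, nonpos_iff_eq_zero] at h
    obtain ⟨ε, hε, h⟩ := h
    refine ⟨ε, hε, ?_⟩
    have h' := measure_eq_zero_iff_ae_notMem.1 h
    filter_upwards [h'] with x hx
    by_contra hlt
    rw [not_le, abs_lt] at hlt
    exact hx ⟨by linarith, by linarith⟩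
  have hP : ∀ j, ∃ M : Lp ℂ 2 ((muI a b).prod (muI c d)) →L[ℂ] Lp ℂ 2 ((muI a b).prod (muI c d)),
      ∀ f, ∀ᵐ z ∂((muI a b).prod (muI c d)), M f z = (p j z.1 : ℂ) * f z := by
    intro j
    refine exists_mulOp_s6 (fun x => (p j x : ℂ)) (by have := hpmeas j; fun_prop) ?_
    obtain ⟨C, hC⟩ := hpbdd j
    exact ⟨C, by simpa using hC⟩
  have hR : ∀ j, ∃ M : Lp ℂ 2 ((muI a b).prod (muI c d)) →L[ℂ] Lp ℂ 2 ((muI a b).prod (muI c d)),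
      ∀ f, ∀ᵐ z ∂((muI a b).prod (muI c d)),
        M f z = ((p j z.1 : ℂ) / ((p j z.1 : ℂ) - (lam : ℂ))) * f z := by
    intro j
    refine exists_mulOp_s6 (fun x => (p j x : ℂ) / ((p j x : ℂ) - (lam : ℂ)))
      (by have := hpmeas j; fun_prop) ?_
    obtain ⟨C, hC⟩ := hpbdd j
    obtain ⟨ε, hε, hE⟩ := hgap j
    refine ⟨C / ε, ?_⟩
    filter_upwards [hC, hE] with x h1 h2
    rw [norm_div, ← Complex.ofReal_sub, Complex.norm_real, Complex.norm_real]
    simp only [Real.norm_eq_abs]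
    have : 0 ≤ C := (abs_nonneg _).trans h1
    gcongr
  choose P hP using hP
  choose R hR using hR
  -- commutation of `Q i` with multiplication operators
  have hcomm : ∀ (g : ℝ → ℂ)
      (M : Lp ℂ 2 ((muI a b).prod (muI c d)) →L[ℂ] Lp ℂ 2 ((muI a b).prod (muI c d))),
      (∀ f, ∀ᵐ z ∂((muI a b).prod (muI c d)), M f z = g z.1 * f z) →
      ∀ i, Q i * M = M * Q i := by
    intro g M hM i
    ext1 f
    apply Lp.ext
    have h2 := Measure.quasiMeasurePreserving_fst (μ := muI a b) (ν := muI c d) |>.ae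
      (Measure.ae_ae_of_ae_prod (hM f))
    filter_upwards [hQ i (M f), hM (Q i f), hQ i f, h2] with z h1 h3 h4 h2
    change (Q i (M f)) z = (M (Q i f)) z
    rw [h1, h3, h4, mul_left_comm, ← integral_const_mul (g z.1)]
    congr 1
    apply integral_congr_ae
    filter_upwards [h2] with t ht
    rw [ht]; ring
  have hQQ : ∀ i j, Q i * Q j = if i = j then Q j else 0 := by
    intro i j
    ext1 f
    apply Lp.ext
    have h2 := Measure.quasiMeasurePreserving_fst (μ := muI a b) (ν := muI c d) |>.ae
      (Measure.ae_ae_of_ae_prod (hQ j f))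
    have h0 : ∀ᵐ z ∂((muI a b).prod (muI c d)),
        (0 : Lp ℂ 2 ((muI a b).prod (muI c d))) z = 0 := Lp.coeFn_zero _ _ _
    filter_upwards [hQ i (Q j f), hQ j f, h2, h0] with z h1 h4 h2 h0
    change (Q i (Q j f)) z = _
    have key : ∫ t, star (ψ i t) * (Q j f) (z.1, t) ∂(muI c d)
        = (if i = j then 1 else 0) * ∫ t, star (ψ j t) * f (z.1, t) ∂(muI c d) := by
      rw [← hψON i j, ← integral_mul_const]
      apply integral_congr_ae
      filter_upwards [h2] with t ht
      rw [ht]; ring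
    rw [h1, key]
    split_ifs with hij
    · subst hij
      rw [h4, one_mul]
    · rw [zero_mul, mul_zero]
      exact h0.symm
  have hPR : ∀ j, P j * R j = P j + (lam : ℂ) • R j := by
    intro j
    ext1 f
    apply Lp.ext
    obtain ⟨ε, hε, hE⟩ := hgap j
    have h2 := Measure.quasiMeasurePreserving_fst (μ := muI a b) (ν := muI c d) |>.ae hE
    filter_upwards [hP j (R j f), hP j f, hR j f, h2, Lp.coeFn_add (P j f) ((lam : ℂ) • R j f),
      Lp.coeFn_smul (lam : ℂ) (R j f)] with z h1 h3 h4 h2 h5 h6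
    change (P j (R j f)) z = (P j f + (lam : ℂ) • R j f : Lp ℂ 2 _) z
    rw [h5, Pi.add_apply, h6, Pi.smul_apply, h1, h3, h4, smul_eq_mul]
    have hne : (p j z.1 : ℂ) - (lam : ℂ) ≠ 0 := by
      rw [← Complex.ofReal_sub, Ne, Complex.ofReal_eq_zero, ← abs_eq_zero]
      exact (hε.trans_le h2).ne'
    field_simp
    ring
  have hRP : ∀ j, R j * P j = P j * R j := by
    intro j
    ext1 f
    apply Lp.ext
    filter_upwards [hP j (R j f), hP j f, hR j f, hR j (P j f)] with z h1 h3 h4 h2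
    change (R j (P j f)) z = (P j (R j f)) z
    rw [h1, h2, h3, h4]; ring
  have hsum : ∀ (F : Fin m → Lp ℂ 2 ((muI a b).prod (muI c d))),
      ∀ᵐ z ∂((muI a b).prod (muI c d)), (∑ j, F j : Lp ℂ 2 _) z = ∑ j, F j z := by
    intro F
    exact Lp.coeFn_fun_finsetSum _ _
  have hT : T2 = ∑ j, P j * Q j := by
    ext1 f
    rw [ContinuousLinearMap.sum_apply]
    apply Lp.ext
    have h2 := Measure.quasiMeasurePreserving_fst (μ := muI a b) (ν := muI c d) |>.ae
      (section_memLp f)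
    filter_upwards [hT2 f, hsum (fun j => (P j * Q j) f), ae_all_iff.2 (fun j => hQ j f),
      ae_all_iff.2 (fun j => hP j (Q j f)), h2] with z h1 h3 h4 h5 h2
    rw [h1, h3]
    simp_rw [Finset.sum_mul]
    rw [integral_finset_sum]
    · refine Finset.sum_congr rfl fun j _ => ?_
      change _ = (P j (Q j f)) z
      rw [h5 j, h4 j, ← mul_assoc, ← integral_const_mul]
      simp only [mul_assoc]
    · intro j _
      have hi : Integrable (fun t => star (ψ j t) * f (z.1, t)) (muI c d) :=
        (hψL2 j).star.integrable_mul h2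
      simpa only [mul_assoc] using hi.const_mul ((p j z.1 : ℂ) * ψ j z.2)
  set S := ∑ j, R j * Q j with hS
  have hprod : ∀ (X Y : Fin m → Lp ℂ 2 ((muI a b).prod (muI c d)) →L[ℂ]
      Lp ℂ 2 ((muI a b).prod (muI c d))), (∀ i j, Q i * Y j = Y j * Q i) →
      (∑ j, X j * Q j) * (∑ j, Y j * Q j) = ∑ j, (X j * Y j) * Q j := by
    intro X Y h
    rw [Finset.sum_mul_sum]
    refine Finset.sum_congr rfl fun i _ => ?_
    rw [Finset.sum_eq_single i]
    · rw [mul_assoc, ← mul_assoc (Q i), h, mul_assoc, hQQ, if_pos rfl, mul_assoc]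
    · intro j _ hj
      rw [mul_assoc, ← mul_assoc (Q i), h, mul_assoc, hQQ, if_neg hj.symm, mul_zero, mul_zero]
    · simp
  have hTS : T2 * S = T2 + (lam : ℂ) • S := by
    rw [hT, hS, hprod _ _ (fun i j => hcomm (fun x => (p j x : ℂ) / ((p j x : ℂ) - (lam : ℂ))) _ (hR j) i)]
    simp only [hPR, add_mul, Finset.sum_add_distrib, Finset.smul_sum, smul_mul_assoc]
  have hST : S * T2 = T2 + (lam : ℂ) • S := by
    rw [hT, hS, hprod _ _ (fun i j => hcomm (fun x => (p j x : ℂ)) _ (hP j) i)]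
    simp only [hRP, hPR, add_mul, Finset.sum_add_distrib, Finset.smul_sum, smul_mul_assoc]
  have hl : (lam : ℂ) ≠ 0 := Complex.ofReal_ne_zero.2 hlam0
  refine ⟨(-(1 / (lam : ℂ))) • (1 - S), ?_, ?_, ?_⟩
  · have : (T2 - (lam : ℂ) • 1) * (1 - S) = (-(lam : ℂ)) • 1 := by
      rw [mul_sub, mul_one, sub_mul, hTS, smul_mul_assoc, one_mul, neg_smul]
      abel
    rw [mul_smul_comm, this, smul_smul]
    simp [hl]
  · have : (1 - S) * (T2 - (lam : ℂ) • 1) = (-(lam : ℂ)) • 1 := by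
      rw [sub_mul, one_mul, mul_sub, hST, mul_smul_comm, mul_one, neg_smul]
      abel
    rw [smul_mul_assoc, this, smul_smul]
    simp [hl]
  · intro f
    have hSf : S f = ∑ j, R j (Q j f) := by
      rw [hS, ContinuousLinearMap.sum_apply]; rfl
    filter_upwards [Lp.coeFn_smul (-(1 / (lam : ℂ))) (f - S f), Lp.coeFn_sub f (S f),
      hsum (fun j => R j (Q j f)), ae_all_iff.2 (fun j => hR j (Q j f))] with z h1 h2 h3 h4
    change ((-(1 / (lam : ℂ))) • (f - S f) : Lp ℂ 2 _) z = _
    rw [h1, Pi.smul_apply, h2, Pi.sub_apply, hSf, h3, smul_eq_mul]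
    simp only [h4]
end
end

section
/- The spectrum of the partial integral operator T₂ is σ(T₂) = {0} ∪ (⋃_{j=1}^m Essran(p_j)). -/
open MeasureTheory Complex

noncomputable section

lemma sa_unit {E : Type*} [NormedAddCommGroup E] [InnerProductSpace ℂ E] [CompleteSpace E]
    (S : E →L[ℂ] E) (hS : IsSelfAdjoint S) (δ : ℝ) (hδ : 0 < δ) (h : ∀ x, δ * ‖x‖ ≤ ‖S x‖) :
    IsUnit S := by
  have hanti : AntilipschitzWith (Real.toNNReal δ⁻¹) S := by
    apply ContinuousLinearMap.antilipschitz_of_bound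
    intro x
    rw [Real.coe_toNNReal _ (by positivity), inv_mul_eq_div, le_div_iff₀ hδ, mul_comm]
    exact h x
  rw [ContinuousLinearMap.isUnit_iff_bijective,
    ContinuousLinearMap.bijective_iff_dense_range_and_antilipschitz]
  refine ⟨?_, _, hanti⟩
  rw [Submodule.topologicalClosure_eq_top_iff, ContinuousLinearMap.orthogonal_range,
    hS.adjoint_eq]
  exact LinearMap.ker_eq_bot.2 hanti.injective

lemma unit_bdd {E : Type*} [NormedAddCommGroup E] [InnerProductSpace ℂ E]
    (S : E →L[ℂ] E) (hS : IsUnit S) : ∃ C : ℝ, 0 < C ∧ ∀ x, ‖x‖ ≤ C * ‖S x‖ := by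
  obtain ⟨u, rfl⟩ := hS
  refine ⟨‖(↑u⁻¹ : E →L[ℂ] E)‖ + 1, by positivity, fun x => ?_⟩
  have h1 : (↑u⁻¹ : E →L[ℂ] E) ((u : E →L[ℂ] E) x) = x := by
    rw [← mul_apply_eq_comp, Units.inv_mul]; rfl
  calc ‖x‖ = ‖(↑u⁻¹ : E →L[ℂ] E) ((u : E →L[ℂ] E) x)‖ := by rw [h1]
    _ ≤ ‖(↑u⁻¹ : E →L[ℂ] E)‖ * ‖(u : E →L[ℂ] E) x‖ := ContinuousLinearMap.le_opNorm _ _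
    _ ≤ _ := by gcongr; linarith

lemma fiber_hilbert {E : Type*} [NormedAddCommGroup E] [InnerProductSpace ℂ E]
    {m : ℕ} (e : Fin m → E) (he : Orthonormal ℂ e) (p : Fin m → ℂ) (l : ℂ) (δ : ℝ) (hδ : 0 ≤ δ)
    (hl : δ ≤ ‖l‖) (hp : ∀ j, δ ≤ ‖l - p j‖) (f : E) :
    δ * ‖f‖ ≤ ‖l • f - ∑ j, (p j * inner ℂ (e j) f) • e j‖ := by
  set s := ∑ j, (inner ℂ (e j) f) • e j with hs
  set h := f - s with hh
  have key : ∀ (k : ℂ) (q : Fin m → ℂ),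
      ‖k • h + ∑ j, q j • e j‖ ^ 2 = ‖k‖ ^ 2 * ‖h‖ ^ 2 + ∑ j, ‖q j‖ ^ 2 := by
    intro k q
    have horth : inner ℂ (k • h) (∑ j, q j • e j) = 0 := by
      rw [inner_sum]
      apply Finset.sum_eq_zero
      intro j _
      rw [inner_smul_left, inner_smul_right, ← inner_conj_symm, hh, inner_sub_right, hs,
        he.inner_right_fintype]
      simp
    have h1 := norm_add_sq_eq_norm_sq_add_norm_sq_of_inner_eq_zero (k • h) (∑ j, q j • e j) horth
    have h2 : ‖∑ j, q j • e j‖ ^ 2 = ∑ j, ‖q j‖ ^ 2 := by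
      have := he.inner_sum q q Finset.univ
      have h3 := inner_self_eq_norm_sq_to_K (𝕜 := ℂ) (∑ j, q j • e j)
      rw [this] at h3
      have h4 : ((∑ j, ‖q j‖ ^ 2 : ℝ) : ℂ) = ((‖∑ j, q j • e j‖ ^ 2 : ℝ) : ℂ) := by
        push_cast
        refine Eq.trans ?_ h3
        refine Finset.sum_congr rfl fun j _ => ?_
        rw [Complex.conj_mul']
      exact (Complex.ofReal_injective h4).symm
    rw [sq, h1, ← sq, ← sq, h2, norm_smul, mul_pow]
  have e1 : l • f - ∑ j, (p j * inner ℂ (e j) f) • e j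
      = l • h + ∑ j, ((l - p j) * inner ℂ (e j) f) • e j := by
    simp only [hh, hs, sub_mul, sub_smul, Finset.sum_sub_distrib, smul_sub, Finset.smul_sum, mul_smul]
    abel
  have e2 : f = (1 : ℂ) • h + ∑ j, (inner ℂ (e j) f) • e j := by
    simp [hh, hs]
  have k1 := key l (fun j => (l - p j) * inner ℂ (e j) f)
  have k2 := key 1 (fun j => inner ℂ (e j) f)
  rw [← e2] at k2
  rw [e1]
  refine le_of_sq_le_sq ?_ (norm_nonneg _) 
  rw [k1, mul_pow, k2, mul_add, Finset.mul_sum]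
  simp only [norm_one, one_pow, one_mul, norm_mul, mul_pow]
  gcongr with j
  exact hp j

lemma essran_compl (μ : Measure ℝ) (φ : ℝ → ℝ) (l : ℝ)
    (h : ¬ ∀ ε > 0, 0 < μ {ξ : ℝ | l - ε < φ ξ ∧ φ ξ < l + ε}) :
    ∃ ε > 0, ∀ᵐ x ∂μ, ε ≤ |l - φ x| := by
  push Not at h
  obtain ⟨ε, hε, h⟩ := h
  refine ⟨ε, hε, ?_⟩
  rw [ae_iff]
  refine measure_mono_null ?_ (le_zero_iff.1 h)
  intro x hx
  simp only [Set.mem_ofPred_eq, not_le, abs_lt] at hx ⊢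
  constructor <;> linarith

lemma int_split (ν : Measure ℝ) {m : ℕ} (ψ : Fin m → ℝ → ℂ) (hψL2 : ∀ j, MemLp (ψ j) 2 ν)
    (q : Fin m → ℂ) (F : ℝ → ℂ) (hF : MemLp F 2 ν) (y : ℝ) :
    ∫ t, (∑ j, q j * ψ j y * star (ψ j t)) * F t ∂ν
      = ∑ j, q j * ψ j y * ∫ t, star (ψ j t) * F t ∂ν := by
  have h : ∀ j, Integrable (fun t => star (ψ j t) * F t) ν := fun j =>
    MemLp.integrable_mul (hψL2 j).star hF
  simp_rw [Finset.sum_mul, mul_assoc (q _ * ψ _ y)]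
  rw [integral_finsetSum _ (fun j _ => (h j).const_mul _)]
  simp_rw [integral_const_mul]

lemma lint_eq {α : Type*} [MeasurableSpace α] (μ : Measure α) (f : α → ℂ) :
    ∫⁻ x, ‖f x‖ₑ ^ 2 ∂μ = eLpNorm f 2 μ ^ 2 := by
  have := eLpNorm_nnreal_pow_eq_lintegral (μ := μ) (f := f) (p := 2) (by norm_num)
  simpa using this.symm

lemma fiber_fun (ν : Measure ℝ) {m : ℕ} (ψ : Fin m → ℝ → ℂ) (hψL2 : ∀ j, MemLp (ψ j) 2 ν)
    (hψON : ∀ i j, ∫ y, star (ψ i y) * ψ j y ∂ν = if i = j then 1 else 0)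
    (q : Fin m → ℂ) (l : ℂ) (δ : ℝ) (hδ : 0 ≤ δ) (hl : δ ≤ ‖l‖) (hq : ∀ j, δ ≤ ‖l - q j‖)
    (F G : ℝ → ℂ) (hF : MemLp F 2 ν)
    (hG : ∀ᵐ y ∂ν, G y = l * F y - ∫ t, (∑ j, q j * ψ j y * star (ψ j t)) * F t ∂ν) :
    ENNReal.ofReal δ ^ 2 * ∫⁻ y, ‖F y‖ₑ ^ 2 ∂ν ≤ ∫⁻ y, ‖G y‖ₑ ^ 2 ∂ν := by
  have hinner : ∀ (i : Fin m) (K : ℝ → ℂ) (hK : MemLp K 2 ν),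
      inner ℂ ((hψL2 i).toLp) (hK.toLp) = ∫ t, star (ψ i t) * K t ∂ν := by
    intro i K hK
    rw [L2.inner_def]
    apply integral_congr_ae
    filter_upwards [(hψL2 i).coeFn_toLp, hK.coeFn_toLp] with t h1 h2
    rw [h1, h2, RCLike.inner_apply, mul_comm]; rfl
  have he : Orthonormal ℂ (fun i => (hψL2 i).toLp) := by
    rw [orthonormal_iff_ite]
    intro i j
    rw [hinner i _ (hψL2 j), hψON]
  have hmain := fiber_hilbert _ he q l δ hδ hl hq hF.toLp
  set R := l • hF.toLp - ∑ j, (q j * inner ℂ ((hψL2 j).toLp) hF.toLp) • (hψL2 j).toLp with hR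
  have hRG : R =ᵐ[ν] G := by
    have hs : (↑↑(∑ j, (q j * inner ℂ ((hψL2 j).toLp) hF.toLp) • (hψL2 j).toLp) : ℝ → ℂ) =ᵐ[ν]
        fun y => ∑ j, (q j * inner ℂ ((hψL2 j).toLp) hF.toLp) * ψ j y := by
      refine (Lp.coeFn_finsetSum _ _).trans ?_
      have : ∀ᵐ y ∂ν, ∀ j, ((q j * inner ℂ ((hψL2 j).toLp) hF.toLp) • (hψL2 j).toLp : Lp ℂ 2 ν) y
          = (q j * inner ℂ ((hψL2 j).toLp) hF.toLp) * ψ j y := by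
        rw [ae_all_iff]
        intro j
        filter_upwards [Lp.coeFn_smul (q j * inner ℂ ((hψL2 j).toLp) hF.toLp) (hψL2 j).toLp,
          (hψL2 j).coeFn_toLp] with y h1 h2
        rw [h1, Pi.smul_apply, h2, smul_eq_mul]
      filter_upwards [this] with y hy
      simp [hy]
    filter_upwards [hG, hs, Lp.coeFn_sub (l • hF.toLp)
      (∑ j, (q j * inner ℂ ((hψL2 j).toLp) hF.toLp) • (hψL2 j).toLp),
      Lp.coeFn_smul l hF.toLp, hF.coeFn_toLp] with y h1 h2 h3 h4 h5
    rw [hR, h3, Pi.sub_apply, h2, h4, Pi.smul_apply, h5, h1, int_split ν ψ hψL2 q F hF,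
      smul_eq_mul]
    congr 1
    refine Finset.sum_congr rfl fun j _ => ?_
    rw [hinner]; ring
  rw [lint_eq, lint_eq, ← mul_pow, ← eLpNorm_congr_ae hRG, ← eLpNorm_congr_ae hF.coeFn_toLp,
    ← Lp.enorm_def, ← Lp.enorm_def, ← ofReal_norm, ← ofReal_norm, ← ENNReal.ofReal_mul hδ]
  gcongr

lemma global_bound (μ ν : Measure ℝ) [IsFiniteMeasure μ] [IsFiniteMeasure ν]
    {m : ℕ} (ψ : Fin m → ℝ → ℂ) (hψL2 : ∀ j, MemLp (ψ j) 2 ν)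
    (hψON : ∀ i j, ∫ y, star (ψ i y) * ψ j y ∂ν = if i = j then 1 else 0)
    (p : Fin m → ℝ → ℝ) (l : ℂ) (δ : ℝ) (hδ : 0 ≤ δ) (hl : δ ≤ ‖l‖)
    (hq : ∀ᵐ x ∂μ, ∀ j, δ ≤ ‖l - p j x‖)
    (T : Lp ℂ 2 (μ.prod ν) →L[ℂ] Lp ℂ 2 (μ.prod ν))
    (hT : ∀ f : Lp ℂ 2 (μ.prod ν), ∀ᵐ z ∂(μ.prod ν),
        T f z = ∫ t, (∑ j, (p j z.1 : ℂ) * ψ j z.2 * star (ψ j t)) * f (z.1, t) ∂ν)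
    (f : Lp ℂ 2 (μ.prod ν)) : δ * ‖f‖ ≤ ‖l • f - T f‖ := by
  have hfin : ∫⁻ z, ‖f z‖ₑ ^ 2 ∂(μ.prod ν) ≠ ⊤ := by
    rw [lint_eq]
    exact ENNReal.pow_ne_top (Lp.eLpNorm_ne_top f)
  have hmf : AEMeasurable (fun z => ‖f z‖ₑ ^ 2) (μ.prod ν) :=
    (Lp.aestronglyMeasurable f).enorm.pow_const _
  have hmg : AEMeasurable (fun z => ‖(l • f - T f : Lp ℂ 2 (μ.prod ν)) z‖ₑ ^ 2) (μ.prod ν) :=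
    (Lp.aestronglyMeasurable _).enorm.pow_const _
  have hF : ∀ᵐ x ∂μ, MemLp (fun y => f (x, y)) 2 ν := by
    have h1 := (Lp.aestronglyMeasurable f).prodMk_left
    rw [lintegral_prod _ hmf] at hfin
    have h2 := ae_lt_top' hmf.lintegral_prod_right' hfin
    filter_upwards [h1, h2] with x hx1 hx2
    refine ⟨hx1, ?_⟩
    rw [lint_eq] at hx2
    by_contra hc
    simp only [not_lt, top_le_iff] at hc
    simp [hc] at hx2
  have hG : ∀ᵐ z ∂(μ.prod ν), (l • f - T f : Lp ℂ 2 (μ.prod ν)) z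
      = l * f z - ∫ t, (∑ j, (p j z.1 : ℂ) * ψ j z.2 * star (ψ j t)) * f (z.1, t) ∂ν := by
    filter_upwards [hT f, Lp.coeFn_sub (l • f) (T f), Lp.coeFn_smul l f] with z h1 h2 h3
    rw [h2, Pi.sub_apply, h3, h1]; rfl
  have key : ENNReal.ofReal δ ^ 2 * ∫⁻ z, ‖f z‖ₑ ^ 2 ∂(μ.prod ν)
      ≤ ∫⁻ z, ‖(l • f - T f : Lp ℂ 2 (μ.prod ν)) z‖ₑ ^ 2 ∂(μ.prod ν) := by
    rw [lintegral_prod _ hmf, lintegral_prod _ hmg,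
      ← lintegral_const_mul' _ _ (ENNReal.pow_ne_top ENNReal.ofReal_ne_top)]
    apply lintegral_mono_ae
    filter_upwards [hF, hq, Measure.ae_ae_of_ae_prod hG] with x h1 h2 h3
    exact fiber_fun ν ψ hψL2 hψON (fun j => p j x) l δ hδ hl h2 _ _ h1 h3
  rw [lint_eq, lint_eq, ← mul_pow, ← Lp.enorm_def, ← Lp.enorm_def, ← ofReal_norm, ← ofReal_norm,
    ← ENNReal.ofReal_mul hδ] at key
  have := (ENNReal.pow_le_pow_left_iff (by norm_num)).1 key
  exact (ENNReal.ofReal_le_ofReal_iff (norm_nonneg _)).1 this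

lemma test_fun (μ ν : Measure ℝ) [IsFiniteMeasure μ] [IsFiniteMeasure ν]
    {m : ℕ} (ψ : Fin m → ℝ → ℂ) (hψL2 : ∀ j, MemLp (ψ j) 2 ν)
    (p : Fin m → ℝ → ℝ)
    (T : Lp ℂ 2 (μ.prod ν) →L[ℂ] Lp ℂ 2 (μ.prod ν))
    (hT : ∀ f : Lp ℂ 2 (μ.prod ν), ∀ᵐ z ∂(μ.prod ν),
        T f z = ∫ t, (∑ j, (p j z.1 : ℂ) * ψ j z.2 * star (ψ j t)) * f (z.1, t) ∂ν)
    (A : Set ℝ) (hA : MeasurableSet A) (hA0 : 0 < μ A) (g : ℝ → ℂ) (hg : MemLp g 2 ν)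
    (hg0 : ¬ g =ᵐ[ν] 0) (l : ℂ) (ε : ℝ)
    (hε : ∀ x ∈ A, ∀ y, ‖l * g y - ∑ j, p j x * ψ j y * ∫ t, star (ψ j t) * g t ∂ν‖ ≤ ε * ‖g y‖) :
    ∃ f : Lp ℂ 2 (μ.prod ν), f ≠ 0 ∧ ‖l • f - T f‖ ≤ ε * ‖f‖ := by
  have hmem : MemLp ((Prod.fst ⁻¹' A).indicator (fun z : ℝ × ℝ => g z.2)) 2 (μ.prod ν) :=
    (hg.comp_snd μ).indicator (measurable_fst hA)
  refine ⟨hmem.toLp, ?_, ?_⟩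
  · intro h0
    have h1 : (Prod.fst ⁻¹' A).indicator (fun z : ℝ × ℝ => g z.2) =ᵐ[μ.prod ν] 0 := by
      refine hmem.coeFn_toLp.symm.trans ?_
      rw [h0]
      exact Lp.coeFn_zero _ _ _
    have h2 := Measure.ae_ae_of_ae_prod h1
    have h3 : ∀ᵐ x ∂μ, x ∉ A := by
      filter_upwards [h2] with x hx hxA
      apply hg0
      filter_upwards [hx] with y hy
      simpa [Set.indicator, hxA] using hy
    rw [ae_iff] at h3
    simp only [not_not, Set.ofPred_mem_eq] at h3
    exact hA0.ne' h3
  · apply Lp.norm_le_mul_norm_of_ae_le_mul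
    have hfa := Measure.ae_ae_of_ae_prod hmem.coeFn_toLp
    have hfa' : ∀ᵐ z ∂(μ.prod ν), ∀ᵐ t ∂ν, (hmem.toLp : Lp ℂ 2 (μ.prod ν)) (z.1, t) =
        (Prod.fst ⁻¹' A).indicator (fun z : ℝ × ℝ => g z.2) (z.1, t) :=
      Measure.quasiMeasurePreserving_fst.ae hfa
    filter_upwards [hT hmem.toLp, Lp.coeFn_sub (l • hmem.toLp) (T hmem.toLp),
      Lp.coeFn_smul l hmem.toLp, hmem.coeFn_toLp, hfa'] with z h1 h2 h3 h4 h5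
    rw [h2, Pi.sub_apply, h3, h1, Pi.smul_apply, h4, smul_eq_mul]
    by_cases hz : z.1 ∈ A
    · have e : ∫ t, (∑ j, (p j z.1 : ℂ) * ψ j z.2 * star (ψ j t)) * (hmem.toLp : Lp ℂ 2 (μ.prod ν)) (z.1, t) ∂ν
          = ∫ t, (∑ j, (p j z.1 : ℂ) * ψ j z.2 * star (ψ j t)) * g t ∂ν := by
        apply integral_congr_ae
        filter_upwards [h5] with t ht
        rw [ht]; simp [Set.indicator, hz]
      rw [e, int_split ν ψ hψL2 (fun j => p j z.1) g hg]
      simpa [Set.indicator, hz] using hε z.1 hz z.2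
    · have e : ∫ t, (∑ j, (p j z.1 : ℂ) * ψ j z.2 * star (ψ j t)) * (hmem.toLp : Lp ℂ 2 (μ.prod ν)) (z.1, t) ∂ν
          = ∫ t, 0 ∂ν := by
        apply integral_congr_ae
        filter_upwards [h5] with t ht
        rw [ht]; simp [Set.indicator, hz]
      rw [e]
      simp [Set.indicator, hz]

lemma exists_perp (c d : ℝ) (hcd : c < d) {m : ℕ} (ψ : Fin m → ℝ → ℂ)
    (hψL2 : ∀ j, MemLp (ψ j) 2 (volume.restrict (Set.Icc c d))) :
    ∃ g : ℝ → ℂ, MemLp g 2 (volume.restrict (Set.Icc c d)) ∧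
      ¬ g =ᵐ[volume.restrict (Set.Icc c d)] 0 ∧
      ∀ j, ∫ t, star (ψ j t) * g t ∂(volume.restrict (Set.Icc c d)) = 0 := by
  set ν := (volume.restrict (Set.Icc c d) : Measure ℝ) with hν
  -- polynomials of degree at most m
  have hmem : ∀ v : Fin (m + 1) → ℂ, MemLp (fun t : ℝ => ∑ k, v k * (t : ℂ) ^ (k : ℕ)) 2 ν := by
    intro v
    have hc : Continuous (fun t : ℝ => ∑ k, v k * (t : ℂ) ^ (k : ℕ)) := by fun_prop
    obtain ⟨C, hC⟩ := isCompact_Icc.exists_bound_of_continuousOn (s := Set.Icc c d) hc.continuousOn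
    refine MemLp.of_bound hc.aestronglyMeasurable C ?_
    exact (ae_restrict_iff' measurableSet_Icc).2 (ae_of_all _ hC)
  have hint : ∀ (j : Fin m) (v : Fin (m + 1) → ℂ), Integrable (fun t => star (ψ j t) * ∑ k : Fin (m+1), v k * (t : ℂ) ^ (k : ℕ)) ν :=
    fun j v => MemLp.integrable_mul (hψL2 j).star (hmem v)
  let Φ : (Fin (m + 1) → ℂ) →ₗ[ℂ] (Fin m → ℂ) :=
    { toFun := fun v j => ∫ t, star (ψ j t) * ∑ k, v k * (t : ℂ) ^ (k : ℕ) ∂ν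
      map_add' := by
        intro v w
        ext j
        simp only [Pi.add_apply]
        rw [← integral_add (hint j v) (hint j w)]
        congr 1; ext t
        rw [← mul_add, ← Finset.sum_add_distrib]
        simp only [add_mul]
      map_smul' := by
        intro r v
        ext j
        simp only [Pi.smul_apply, smul_eq_mul, RingHom.id_apply]
        rw [← integral_const_mul]
        congr 1; ext t
        rw [mul_left_comm, Finset.mul_sum]
        simp only [mul_assoc, Finset.mul_sum] }
  have hker : Φ.ker ≠ ⊥ := LinearMap.ker_ne_bot_of_finrank_lt (by simp)
  obtain ⟨v, hv, hv0⟩ := (Submodule.ne_bot_iff _).1 hker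
  refine ⟨_, hmem v, ?_, fun j => congrFun (LinearMap.mem_ker.1 hv) j⟩
  intro h0
  let P : Polynomial ℂ := ∑ k : Fin (m+1), Polynomial.C (v k) * Polynomial.X ^ (k : ℕ)
  have hP : ∀ t : ℝ, P.eval (t : ℂ) = ∑ k, v k * (t : ℂ) ^ (k : ℕ) := by
    intro t; simp [P, Polynomial.eval_finsetSum]
  have hP0 : P ≠ 0 := by
    intro h
    apply hv0
    ext k
    have := congrArg (fun Q => Q.coeff (k : ℕ)) h
    simp only [P, Polynomial.finsetSum_coeff, Polynomial.coeff_C_mul_X_pow, Polynomial.coeff_zero] at this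
    rw [Finset.sum_eq_single k] at this
    · simpa using this
    · intro b _ hb
      rw [if_neg]
      intro hh; exact hb (Fin.ext hh.symm)
    · simp
  have hfinite : Set.Finite {t : ℝ | P.eval (t : ℂ) = 0} := by
    have h1 : Set.Finite {z : ℂ | P.IsRoot z} := Polynomial.finite_setOfPred_isRoot hP0
    exact h1.preimage (Complex.ofReal_injective.injOn)
  have hnull : volume {t : ℝ | P.eval (t : ℂ) = 0} = 0 := hfinite.measure_zero _
  have h1 : ∀ᵐ t : ℝ ∂ν, ¬ (P.eval (t : ℂ) = 0) := by
    apply ae_restrict_of_ae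
    rw [ae_iff]; simp only [not_not]; exact hnull
  have h2 : ∀ᵐ t ∂ν, False := by
    filter_upwards [h1, h0] with t a1 a2
    exact a1 ((hP t).trans a2)
  rw [ae_iff] at h2
  simp [hν, hcd] at h2
  linarith

theorem statement7
    (a b c d : ℝ) (hab : a < b) (hcd : c < d)
    (m : ℕ) (hm : 1 ≤ m)
    (ψ : Fin m → ℝ → ℂ)
    (hψL2 : ∀ j, MemLp (ψ j) 2 (muI c d))
    (hψON : ∀ i j, ∫ y, star (ψ i y) * ψ j y ∂(muI c d) = if i = j then 1 else 0)
    (p : Fin m → ℝ → ℝ)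
    (hpmeas : ∀ j, Measurable (p j))
    (hpbdd : ∀ j, ∃ C : ℝ, ∀ᵐ x ∂(muI a b), |p j x| ≤ C)
    (T2 : Lp ℂ 2 ((muI a b).prod (muI c d)) →L[ℂ] Lp ℂ 2 ((muI a b).prod (muI c d)))
    (hT2sa : IsSelfAdjoint T2)
    (hT2 : ∀ f : Lp ℂ 2 ((muI a b).prod (muI c d)),
      ∀ᵐ z ∂((muI a b).prod (muI c d)),
        T2 f z = ∫ t, (∑ j, (p j z.1 : ℂ) * ψ j z.2 * star (ψ j t)) * f (z.1, t) ∂(muI c d)) :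
    spectrum ℂ T2 = {0} ∪ ⋃ j : Fin m, (fun r : ℝ => (r : ℂ)) '' Essran (muI a b) (p j) := by
  have hreal : ∀ (r : ℝ), IsSelfAdjoint (algebraMap ℂ (Lp ℂ 2 ((muI a b).prod (muI c d)) →L[ℂ]
      Lp ℂ 2 ((muI a b).prod (muI c d))) (r : ℂ) - T2) := by
    intro r
    refine IsSelfAdjoint.sub (IsSelfAdjoint.algebraMap _ ?_) hT2sa
    simp [IsSelfAdjoint]
  have happ : ∀ (l : ℂ) f, (algebraMap ℂ (Lp ℂ 2 ((muI a b).prod (muI c d)) →L[ℂ]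
      Lp ℂ 2 ((muI a b).prod (muI c d))) l - T2) f = l • f - T2 f := by
    intro l f
    simp [Algebra.algebraMap_eq_smul_one]
  apply Set.Subset.antisymm
  · intro l hl
    by_contra hcon
    obtain ⟨r, rfl⟩ : ∃ r : ℝ, l = r := ⟨l.re, hT2sa.mem_spectrum_eq_re hl⟩
    simp only [Set.mem_union, Set.mem_singleton_iff, Set.mem_iUnion, not_or, not_exists] at hcon
    obtain ⟨hr0, hcon⟩ := hcon
    have h1 : ∀ j, ∃ ε > 0, ∀ᵐ x ∂(muI a b), ε ≤ |r - p j x| := fun j =>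
      essran_compl _ _ _ (fun h => hcon j ⟨r, h, rfl⟩)
    choose ε hε hb using h1
    obtain ⟨δ, hδ, hδr, hδε⟩ : ∃ δ > 0, δ ≤ ‖(r : ℂ)‖ ∧ ∀ j, δ ≤ ε j := by
      haveI : Nonempty (Fin m) := ⟨⟨0, hm⟩⟩
      obtain ⟨j0, hj0⟩ := Finite.exists_min ε
      exact ⟨min ‖(r : ℂ)‖ (ε j0), lt_min (norm_pos_iff.2 hr0) (hε j0), min_le_left _ _,
        fun j => (min_le_right _ _).trans (hj0 j)⟩
    refine hl (sa_unit _ (hreal r) δ hδ ?_)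
    intro f
    rw [happ]
    refine global_bound _ _ ψ hψL2 hψON p r δ hδ.le hδr ?_ T2 hT2 f
    filter_upwards [ae_all_iff.2 hb] with x hx j
    refine (hδε j).trans ((hx j).trans_eq ?_)
    rw [← Complex.ofReal_sub, Complex.norm_real, Real.norm_eq_abs]
  · have hmem : ∀ l : ℂ, (∀ ε > 0, ∃ f : Lp ℂ 2 ((muI a b).prod (muI c d)), f ≠ 0 ∧
        ‖l • f - T2 f‖ ≤ ε * ‖f‖) → l ∈ spectrum ℂ T2 := by
      intro l h hu
      obtain ⟨C, hC, hb⟩ := unit_bdd _ hu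
      obtain ⟨f, hf0, hf⟩ := h (1 / (2 * C)) (by positivity)
      have h1 := hb f
      rw [happ] at h1
      have h2 : ‖f‖ ≤ C * (1 / (2 * C) * ‖f‖) := h1.trans (by gcongr)
      have h3 : C * (1 / (2 * C) * ‖f‖) = ‖f‖ / 2 := by field_simp
      have h4 := norm_pos_iff.2 hf0
      linarith
    rintro l (hl | hl)
    · rw [Set.mem_singleton_iff] at hl
      subst hl
      apply hmem
      intro ε hε
      obtain ⟨g, hg, hg0, hperp⟩ := exists_perp c d hcd ψ hψL2
      refine test_fun _ _ ψ hψL2 p T2 hT2 Set.univ MeasurableSet.univ ?_ g hg hg0 0 ε ?_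
      · simp [hab]
      · intro x _ y
        simp only [hperp]
        simp only [zero_mul, mul_zero, Finset.sum_const_zero, sub_zero, norm_zero]
        positivity
    · obtain ⟨j, r, hr, rfl⟩ := Set.mem_iUnion.1 hl
      apply hmem
      intro ε hε
      refine test_fun _ _ ψ hψL2 p T2 hT2 _ ?_ (hr ε hε) (ψ j) (hψL2 j) ?_ _ ε ?_
      · exact (measurableSet_lt measurable_const (hpmeas j)).inter
          (measurableSet_lt (hpmeas j) measurable_const)
      · intro h0
        have h1 := hψON j j
        have h2 : ∫ y, star (ψ j y) * ψ j y ∂(muI c d) = ∫ y, (0 : ℂ) ∂(muI c d) := by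
          apply integral_congr_ae
          filter_upwards [h0] with y hy
          simp [hy]
        rw [h2] at h1
        simp at h1
      · intro x hx y
        simp only [hψON]
        simp only [mul_ite, mul_one, mul_zero, Finset.sum_ite_eq', Finset.mem_univ, if_true]
        rw [← sub_mul, norm_mul, ← Complex.ofReal_sub, Complex.norm_real, Real.norm_eq_abs]
        gcongr
        rw [abs_le]
        obtain ⟨hx1, hx2⟩ := hx
        constructor <;> linarith
end
end

section
/- Let τ ≠ 0 be such that τ⁻¹ belongs to the resolvent set of T₁ and to the resolvent set of T₂. Then for every f ∈ H the following three homogeneous equations are equivalent: (i) f − τ(T₁+T₂)f = 0; (ii) f − τ²·W₁(τ)f = 0; (iii) f − τ²·W₂(τ)f = 0. In particular, the three equations have the same solution set in H. -/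
open MeasureTheory Complex

noncomputable section

lemma aux_swap {μ ν : Measure ℝ} [SFinite μ] [SFinite ν] {p : ℝ × ℝ → Prop}
    (hp : ∀ᵐ z ∂(μ.prod ν), p z) : ∀ᵐ z ∂(ν.prod μ), p z.swap :=
  (Measure.measurePreserving_swap (μ := ν) (ν := μ)).quasiMeasurePreserving.ae hp

lemma aux_slice {μ ν : Measure ℝ} [SFinite μ] [SFinite ν] {p : ℝ × ℝ → Prop}
    (hp : ∀ᵐ z ∂(μ.prod ν), p z) : ∀ᵐ y ∂ν, ∀ᵐ x ∂μ, p (x, y) :=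
  Measure.ae_ae_of_ae_prod (aux_swap hp)

lemma aux_snd {μ ν : Measure ℝ} [SFinite μ] [SFinite ν] {p : ℝ → Prop}
    (hp : ∀ᵐ y ∂ν, p y) : ∀ᵐ z ∂(μ.prod ν), p z.2 :=
  (Measure.quasiMeasurePreserving_snd (μ := μ) (ν := ν)).ae hp

lemma aux_int {μ : Measure ℝ} {f g : ℝ → ℂ} (hf : MemLp f 2 μ) (hg : MemLp g 2 μ) :
    Integrable (fun s => star (f s) * g s) μ :=
  MemLp.integrable_mul hf.star hg

lemma aux_memLp_slice {μ ν : Measure ℝ} [SFinite μ] [SFinite ν] {f : ℝ × ℝ → ℂ}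
    (hf : MemLp f 2 (μ.prod ν)) : ∀ᵐ y ∂ν, MemLp (fun s => f (s, y)) 2 μ := by
  have h1 := (memLp_two_iff_integrable_sq_norm hf.1).1 hf
  have h2 := h1.prod_left_ae
  have h3 : ∀ᵐ y ∂ν, AEStronglyMeasurable (fun s => f (s, y)) μ :=
    hf.1.prod_swap.prodMk_left
  filter_upwards [h2, h3] with y hy hy3
  exact (memLp_two_iff_integrable_sq_norm hy3).2 hy

lemma aux_A {μ ν : Measure ℝ} [SFinite μ] [SFinite ν] {n : ℕ} {φ : Fin n → ℝ → ℂ}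
    (hφ : ∀ k, MemLp (φ k) 2 μ) (h : Fin n → ℝ → ℝ) {f : ℝ × ℝ → ℂ}
    (hf : MemLp f 2 (μ.prod ν)) : ∀ᵐ z ∂(μ.prod ν),
      ∫ s, (∑ k, φ k z.1 * star (φ k s) * (h k z.2 : ℂ)) * f (s, z.2) ∂μ
        = ∑ k, (h k z.2 : ℂ) * (φ k z.1 * ∫ s, star (φ k s) * f (s, z.2) ∂μ) := by
  have h1 := aux_snd (μ := μ) (aux_memLp_slice hf)
  filter_upwards [h1] with z hz
  have e : ∀ s, (∑ k, φ k z.1 * star (φ k s) * (h k z.2 : ℂ)) * f (s, z.2)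
      = ∑ k, (h k z.2 : ℂ) * φ k z.1 * (star (φ k s) * f (s, z.2)) := by
    intro s
    rw [Finset.sum_mul]
    exact Finset.sum_congr rfl fun k _ => by ring
  simp_rw [e]
  rw [integral_finsetSum _ fun k _ => (aux_int (hφ k) hz).const_mul _]
  refine Finset.sum_congr rfl fun k _ => ?_
  rw [integral_const_mul, mul_assoc]

lemma aux_B {μ ν : Measure ℝ} [SFinite μ] [SFinite ν] {n : ℕ} {φ : Fin n → ℝ → ℂ}
    (hφ : ∀ k, MemLp (φ k) 2 μ)
    (hON : ∀ i j, ∫ x, star (φ i x) * φ j x ∂μ = if i = j then 1 else 0)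
    {g : ℝ × ℝ → ℂ} {u : Fin n → ℝ → ℂ}
    (hg : ∀ᵐ z ∂(μ.prod ν), g z = ∑ k, φ k z.1 * u k z.2) (j : Fin n) :
    ∀ᵐ z ∂(μ.prod ν), ∫ s, star (φ j s) * g (s, z.2) ∂μ = u j z.2 := by
  refine aux_snd (p := fun y => ∫ s, star (φ j s) * g (s, y) ∂μ = u j y) ?_
  filter_upwards [aux_slice hg] with y hy
  have e : ∫ s, star (φ j s) * g (s, y) ∂μ
      = ∫ s, ∑ k, u k y * (star (φ j s) * φ k s) ∂μ := by
    refine integral_congr_ae ?_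
    filter_upwards [hy] with s hs
    simp only [hs, Finset.mul_sum]
    exact Finset.sum_congr rfl fun k _ => by ring
  rw [e, integral_finsetSum _ fun k _ => (aux_int (hφ j) (hφ k)).const_mul _]
  simp_rw [integral_const_mul, hON]
  simp

lemma aux_res {Z : Type*} [MeasurableSpace Z] {M : Measure Z} {n : ℕ}
    {H : Fin n → Z → ℝ} (hH : ∀ k, Measurable (H k))
    {T S : Lp ℂ 2 M →L[ℂ] Lp ℂ 2 M} {P : Fin n → (Lp ℂ 2 M →L[ℂ] Lp ℂ 2 M)} {τ : ℂ}
    (hA : ∀ f, ∀ᵐ z ∂M, T f z = ∑ k, (H k z : ℂ) * P k f z)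
    (hB : ∀ (f g : Lp ℂ 2 M) (F : Fin n → ℝ → ℂ),
      (∀ᵐ z ∂M, g z = ∑ k, F k (H k z) * P k f z) →
        ∀ j, ∀ᵐ z ∂M, P j g z = F j (H j z) * P j f z)
    (hS : ∀ f, ∀ᵐ z ∂M, S f z = ∑ k, ((H k z : ℂ) / (1 - τ * (H k z : ℂ))) * P k f z)
    {R : Lp ℂ 2 M →L[ℂ] Lp ℂ 2 M}
    (hR : R * (1 - τ • T) = 1 ∧ (1 - τ • T) * R = 1) : R = 1 + τ • S := by
  classical
  have key : ∀ f k, ∀ᵐ z ∂M, 1 - τ * (H k z : ℂ) = 0 → P k f z = 0 := by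
    intro f k
    set A : Set Z := {z | 1 - τ * (H k z : ℂ) = 0} with hAdef
    have hAm : MeasurableSet A := by
      have : Measurable fun z => 1 - τ * (H k z : ℂ) := by
        have := hH k
        fun_prop
      exact this (measurableSet_singleton 0)
    have hmem := (Lp.memLp (P k f)).indicator hAm
    set g : Lp ℂ 2 M := hmem.toLp with hgdef
    have hg : ∀ᵐ z ∂M, g z = A.indicator (P k f) z := hmem.coeFn_toLp
    let F : Fin n → ℝ → ℂ := fun j t => if j = k ∧ 1 - τ * (t : ℂ) = 0 then 1 else 0
    have hgF : ∀ᵐ z ∂M, g z = ∑ j, F j (H j z) * P j f z := by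
      filter_upwards [hg] with z hz
      rw [hz, Finset.sum_eq_single k]
      · by_cases hz : 1 - τ * (H k z : ℂ) = 0 <;> simp [F, A, Set.indicator, hz]
      · intro j _ hj
        simp [F, hj]
      · simp
    have hPg := hB f g F hgF
    have hTg : (1 - τ • T) g = 0 := by
      have : τ • T g = g := by
        apply Lp.ext
        filter_upwards [hgF, hA g, Lp.coeFn_smul τ (T g), ae_all_iff.2 hPg] with z h1 h2 h3 h4
        rw [h3, Pi.smul_apply, h2, h1, smul_eq_mul, Finset.mul_sum]
        refine Finset.sum_congr rfl fun j _ => ?_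
        rw [h4 j]
        by_cases hc : j = k ∧ 1 - τ * (H j z : ℂ) = 0
        · have : F j (H j z) = 1 := if_pos hc
          rw [this]
          linear_combination (-(P j f z)) * hc.2
        · have : F j (H j z) = 0 := if_neg hc
          rw [this]; ring
      simp [this]
    have hg0 : g = 0 := by
      have := congrArg (fun L => L g) hR.1
      simp only [mul_apply_eq_comp, hTg, map_zero] at this
      simpa using this.symm
    have h0 : ∀ᵐ z ∂M, g z = 0 := by
      rw [hg0]; exact Lp.coeFn_zero _ _ _
    filter_upwards [hg, h0] with z h1 h2 h3
    rw [h2, Set.indicator_of_mem (show z ∈ A from h3)] at h1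
    exact h1.symm
  have hST : ∀ f, S f - T f = τ • S (T f) := by
    intro f
    have hPT := hB f (T f) (fun _ t => (t : ℂ)) (hA f)
    apply Lp.ext
    filter_upwards [Lp.coeFn_sub (S f) (T f), Lp.coeFn_smul τ (S (T f)), hS f, hA f, hS (T f),
      ae_all_iff.2 hPT, ae_all_iff.2 (key f)] with z h1 h2 h3 h4 h5 h6 h7
    rw [h1, h2, Pi.sub_apply, Pi.smul_apply, h3, h4, h5, ← Finset.sum_sub_distrib, smul_eq_mul,
      Finset.mul_sum]
    refine Finset.sum_congr rfl fun k _ => ?_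
    rw [h6 k]
    by_cases hc : 1 - τ * (H k z : ℂ) = 0
    · rw [h7 k hc]; ring
    · have hq := mul_inv_cancel₀ hc
      rw [div_eq_mul_inv]
      linear_combination ((H k z : ℂ) * P k f z) * hq
  have h1 : (1 + τ • S) * (1 - τ • T) = 1 := by
    ext1 f
    have := hST f
    simp only [mul_apply_eq_comp, add_apply,
      sub_apply, smul_apply,
      one_apply_eq_self, map_sub, map_smul]
    rw [← this]
    module
  calc R = ((1 + τ • S) * (1 - τ • T)) * R := by rw [h1, one_mul]
    _ = 1 + τ • S := by rw [mul_assoc, hR.2, mul_one]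

lemma aux_alg {V : Type*} [NormedAddCommGroup V] [NormedSpace ℂ V] {T1 T2 S1 R1 R2 : V →L[ℂ] V}
    {τ : ℂ} (hR1 : R1 * (1 - τ • T1) = 1 ∧ (1 - τ • T1) * R1 = 1)
    (hR2 : R2 * (1 - τ • T2) = 1 ∧ (1 - τ • T2) * R2 = 1) (hS : R1 = 1 + τ • S1) (f : V) :
    f - τ • (T1 + T2) f = 0 ↔ f - τ ^ 2 • (R2 * S1 * T2) f = 0 := by
  have a1 : ∀ v, R1 (v - τ • T1 v) = v := fun v => by
    simpa using congrArg (fun L => L v) hR1.1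
  have a2 : ∀ v, R1 v - τ • T1 (R1 v) = v := fun v => by
    simpa using congrArg (fun L => L v) hR1.2
  have b1 : ∀ v, R2 (v - τ • T2 v) = v := fun v => by
    simpa using congrArg (fun L => L v) hR2.1
  have b2 : ∀ v, R2 v - τ • T2 (R2 v) = v := fun v => by
    simpa using congrArg (fun L => L v) hR2.2
  have s : ∀ v, R1 v = v + τ • S1 v := fun v => by simp [hS]
  simp only [mul_apply_eq_comp, add_apply]
  constructor
  · intro hf
    have h1 : f - τ • T1 f = τ • T2 f := by
      rw [← sub_eq_zero, ← hf]; module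
    have h2 : f = τ • T2 f + τ ^ 2 • S1 (T2 f) := by
      have := a1 f
      rw [h1, s, map_smul] at this
      rw [sq, mul_smul]; exact this.symm
    have h3 : f - τ • T2 f = τ ^ 2 • S1 (T2 f) := by
      rw [sub_eq_iff_eq_add']; exact h2
    have := b1 f
    rw [h3, map_smul] at this
    rw [this, sub_self]
  · intro hf
    rw [sub_eq_zero] at hf
    have h3 : f - τ • T2 f = τ ^ 2 • S1 (T2 f) := by
      have := b2 (τ ^ 2 • S1 (T2 f))
      rwa [map_smul, ← hf] at this
    have h2 : f = R1 (τ • T2 f) := by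
      rw [s, map_smul, smul_smul, ← sq]
      exact sub_eq_iff_eq_add'.1 h3
    have := a2 (τ • T2 f)
    rw [← h2] at this
    rw [smul_add, ← sub_sub, sub_eq_zero]
    exact this

set_option maxHeartbeats 400000 in
theorem statement8
    (a b c d : ℝ) (hab : a < b) (hcd : c < d)
    (n : ℕ) (hn : 1 ≤ n)
    (φ : Fin n → ℝ → ℂ)
    (hφL2 : ∀ k, MemLp (φ k) 2 (muI a b))
    (hφON : ∀ i j, ∫ x, star (φ i x) * φ j x ∂(muI a b) = if i = j then 1 else 0)
    (h : Fin n → ℝ → ℝ)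
    (hhmeas : ∀ k, Measurable (h k))
    (hhbdd : ∀ k, ∃ C : ℝ, ∀ᵐ y ∂(muI c d), |h k y| ≤ C)
    (m : ℕ) (hm : 1 ≤ m)
    (ψ : Fin m → ℝ → ℂ)
    (hψL2 : ∀ j, MemLp (ψ j) 2 (muI c d))
    (hψON : ∀ i j, ∫ y, star (ψ i y) * ψ j y ∂(muI c d) = if i = j then 1 else 0)
    (p : Fin m → ℝ → ℝ)
    (hpmeas : ∀ j, Measurable (p j))
    (hpbdd : ∀ j, ∃ C : ℝ, ∀ᵐ x ∂(muI a b), |p j x| ≤ C)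
    (T1 T2 : Lp ℂ 2 ((muI a b).prod (muI c d)) →L[ℂ] Lp ℂ 2 ((muI a b).prod (muI c d)))
    (hT1sa : IsSelfAdjoint T1) (hT2sa : IsSelfAdjoint T2)
    (hT1 : ∀ f : Lp ℂ 2 ((muI a b).prod (muI c d)),
      ∀ᵐ z ∂((muI a b).prod (muI c d)),
        T1 f z = ∫ s, (∑ k, φ k z.1 * star (φ k s) * (h k z.2 : ℂ)) * f (s, z.2) ∂(muI a b))
    (hT2 : ∀ f : Lp ℂ 2 ((muI a b).prod (muI c d)),
      ∀ᵐ z ∂((muI a b).prod (muI c d)),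
        T2 f z = ∫ t, (∑ j, (p j z.1 : ℂ) * ψ j z.2 * star (ψ j t)) * f (z.1, t) ∂(muI c d))
    -- the orthogonal projections `P k` and `Q j`
    (P : Fin n → (Lp ℂ 2 ((muI a b).prod (muI c d)) →L[ℂ] Lp ℂ 2 ((muI a b).prod (muI c d))))
    (hP : ∀ k, ∀ f : Lp ℂ 2 ((muI a b).prod (muI c d)),
      ∀ᵐ z ∂((muI a b).prod (muI c d)),
        P k f z = φ k z.1 * ∫ s, star (φ k s) * f (s, z.2) ∂(muI a b))
    (Q : Fin m → (Lp ℂ 2 ((muI a b).prod (muI c d)) →L[ℂ] Lp ℂ 2 ((muI a b).prod (muI c d))))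
    (hQ : ∀ j, ∀ f : Lp ℂ 2 ((muI a b).prod (muI c d)),
      ∀ᵐ z ∂((muI a b).prod (muI c d)),
        Q j f z = ψ j z.2 * ∫ t, star (ψ j t) * f (z.1, t) ∂(muI c d))
    -- the parameter τ
    (τ : ℂ) (hτ0 : τ ≠ 0)
    (hτ1 : τ⁻¹ ∈ resolventSet ℂ T1) (hτ2 : τ⁻¹ ∈ resolventSet ℂ T2)
    -- the operators S₁(τ) and S₂(τ)
    (S1 S2 : Lp ℂ 2 ((muI a b).prod (muI c d)) →L[ℂ] Lp ℂ 2 ((muI a b).prod (muI c d)))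
    (hS1 : ∀ f : Lp ℂ 2 ((muI a b).prod (muI c d)),
      ∀ᵐ z ∂((muI a b).prod (muI c d)),
        S1 f z = ∑ k, ((h k z.2 : ℂ) / (1 - τ * (h k z.2 : ℂ))) * P k f z)
    (hS2 : ∀ f : Lp ℂ 2 ((muI a b).prod (muI c d)),
      ∀ᵐ z ∂((muI a b).prod (muI c d)),
        S2 f z = ∑ i, ((p i z.1 : ℂ) / (1 - τ * (p i z.1 : ℂ))) * Q i f z)
    -- the (two-sided) inverses of `E - τT₁` and `E - τT₂`
    (R1 R2 : Lp ℂ 2 ((muI a b).prod (muI c d)) →L[ℂ] Lp ℂ 2 ((muI a b).prod (muI c d)))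
    (hR1 : R1 * (1 - τ • T1) = 1 ∧ (1 - τ • T1) * R1 = 1)
    (hR2 : R2 * (1 - τ • T2) = 1 ∧ (1 - τ • T2) * R2 = 1)
    -- the operators W₁(τ) = (E-τT₂)⁻¹ S₁(τ) T₂ and W₂(τ) = (E-τT₁)⁻¹ S₂(τ) T₁
    (W1 W2 : Lp ℂ 2 ((muI a b).prod (muI c d)) →L[ℂ] Lp ℂ 2 ((muI a b).prod (muI c d)))
    (hW1 : W1 = R2 * S1 * T2) (hW2 : W2 = R1 * S2 * T1) :
    ∀ f : Lp ℂ 2 ((muI a b).prod (muI c d)),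
      (f - τ • (T1 + T2) f = 0 ↔ f - τ ^ 2 • W1 f = 0) ∧
      (f - τ • (T1 + T2) f = 0 ↔ f - τ ^ 2 • W2 f = 0) := by
  have r1 : R1 = 1 + τ • S1 := by
    refine aux_res (M := (muI a b).prod (muI c d)) (T := T1) (S := S1)
      (τ := τ) (R := R1) (H := fun k z => h k z.2) (P := P) (fun k => (hhmeas k).comp measurable_snd)
      ?_ ?_ hS1 hR1
    · intro f
      filter_upwards [hT1 f, aux_A hφL2 h (Lp.memLp f), ae_all_iff.2 fun k => hP k f]
        with z h1 h2 h3
      rw [h1, h2]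
      exact Finset.sum_congr rfl fun k _ => by rw [h3 k]
    · intro f g F hg j
      have hg' : ∀ᵐ z ∂((muI a b).prod (muI c d)), g z = ∑ k, φ k z.1 *
          (fun y => F k (h k y) * ∫ s, star (φ k s) * f (s, y) ∂(muI a b)) z.2 := by
        filter_upwards [hg, ae_all_iff.2 fun k => hP k f] with z h1 h2
        rw [h1]
        exact Finset.sum_congr rfl fun k _ => by rw [h2 k]; ring
      filter_upwards [hP j g, hP j f,
        aux_B (u := fun k y => F k (h k y) * ∫ s, star (φ k s) * f (s, y) ∂(muI a b))
          hφL2 hφON hg' j] with z h1 h2 h3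
      rw [h1, h2, h3]; ring
  have r2 : R2 = 1 + τ • S2 := by
    refine aux_res (M := (muI a b).prod (muI c d)) (T := T2) (S := S2)
      (τ := τ) (R := R2) (H := fun k z => p k z.1) (P := Q) (fun k => (hpmeas k).comp measurable_fst)
      ?_ ?_ hS2 hR2
    · intro f
      have hf : MemLp (fun z : ℝ × ℝ => f z.swap) 2 ((muI c d).prod (muI a b)) :=
        (Lp.memLp f).comp_measurePreserving Measure.measurePreserving_swap
      filter_upwards [hT2 f, aux_swap (aux_A hψL2 p hf), ae_all_iff.2 fun k => hQ k f]
        with z h1 h2 h3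
      simp only [Prod.fst_swap, Prod.snd_swap, Prod.swap_prod_mk] at h2
      rw [h1]
      have e : ∀ t, (∑ j, (p j z.1 : ℂ) * ψ j z.2 * star (ψ j t))
          = ∑ j, ψ j z.2 * star (ψ j t) * (p j z.1 : ℂ) := fun t =>
        Finset.sum_congr rfl fun k _ => by ring
      simp_rw [e]
      rw [h2]
      exact Finset.sum_congr rfl fun k _ => by rw [h3 k]
    · intro f g F hg j
      have hg' : ∀ᵐ z ∂((muI c d).prod (muI a b)), g z.swap = ∑ k, ψ k z.1 *
          (fun x => F k (p k x) * ∫ t, star (ψ k t) * f (x, t) ∂(muI c d)) z.2 := by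
        filter_upwards [aux_swap hg, aux_swap (ae_all_iff.2 fun k => hQ k f)] with z h1 h2
        rw [h1]
        exact Finset.sum_congr rfl fun k _ => by
          rw [h2 k]; simp only [Prod.fst_swap, Prod.snd_swap]; ring
      filter_upwards [hQ j g, hQ j f,
        aux_swap (aux_B (g := fun z => g z.swap)
          (u := fun k x => F k (p k x) * ∫ t, star (ψ k t) * f (x, t) ∂(muI c d))
          hψL2 hψON hg' j)] with z h1 h2 h3
      simp only [Prod.fst_swap, Prod.snd_swap, Prod.swap_prod_mk] at h3
      rw [h1, h2, h3]; ring
  intro f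
  refine ⟨?_, ?_⟩
  · rw [hW1]; exact aux_alg hR1 hR2 r1 f
  · rw [hW2, add_comm T1 T2]; exact aux_alg hR2 hR1 r2 f
end
end

section
/- Let τ ∈ R(T) ∪ D(T). The homogeneous partial integral equation f − τ(T₁+T₂)f = 0 has a nontrivial solution f ∈ H, f ≠ 0, if and only if τ ∈ D(T). -/
open MeasureTheory Complex

noncomputable section

section helpers

theorem abs_aux {E : Type*} [NormedAddCommGroup E] [NormedSpace ℂ E]
    (T1 T2 S W : E →L[ℂ] E) (τ : ℂ) (h0 : τ ≠ 0)
    (h1 : τ⁻¹ ∈ resolventSet ℂ T1) (h2 : τ⁻¹ ∈ resolventSet ℂ T2)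
    (hS : S = T1 + τ • (S * T1)) (hW : (1 - τ • T2) * W = S * T2) (f : E) :
    f - τ • (T1 + T2) f = 0 ↔ (τ ^ 2 • W) f = f := by
  have key : ∀ T : E →L[ℂ] E, τ⁻¹ ∈ resolventSet ℂ T → IsUnit (1 - τ • T) := by
    intro T hT
    rw [spectrum.mem_resolventSet_iff] at hT
    have := hT.smul (Units.mk0 τ h0)
    convert this using 1
    rw [Units.smul_def, Units.val_mk0, smul_sub, Algebra.algebraMap_eq_smul_one, smul_smul,
      mul_inv_cancel₀ h0, one_smul]
  obtain ⟨U, hU⟩ := key T1 h1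
  obtain ⟨V, hV⟩ := key T2 h2
  have e1 : (1 + τ • S) * (U : E →L[ℂ] E) = 1 := by
    rw [hU, add_mul, mul_sub, mul_sub, one_mul, one_mul, mul_one, smul_mul_assoc,
      mul_smul_comm]
    nth_rewrite 1 [hS]
    simp only [smul_add]
    abel
  have e2 : (1 - τ • T1) * (1 + τ • S) = 1 := by
    rw [← hU]
    have : (1 + τ • S) = ((U⁻¹ : (E →L[ℂ] E)ˣ) : E →L[ℂ] E) := by
      exact Units.eq_inv_of_mul_eq_one_right e1
    rw [this, U.mul_inv]
  rw [hU] at e1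
  have Vinj : ∀ x y : E, (1 - τ • T2) x = (1 - τ • T2) y → x = y := by
    intro x y hxy
    rw [← hV] at hxy
    have := congrArg ((V⁻¹ : (E →L[ℂ] E)ˣ) : E →L[ℂ] E) hxy
    rw [← mul_apply_eq_comp, ← mul_apply_eq_comp, V.inv_mul] at this
    simpa using this
  have a1 : f - τ • (T1 + T2) f = 0 ↔ (1 - τ • T1) f = τ • T2 f := by
    rw [← sub_eq_zero (a := (1 - τ • T1) f)]
    simp [sub_sub]
  have a2 : (1 - τ • T1) f = τ • T2 f ↔ f = (1 + τ • S) (τ • T2 f) := by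
    constructor
    · intro hh
      rw [← hh, ← mul_apply_eq_comp, e1]; simp
    · intro hh
      nth_rewrite 1 [hh]
      rw [← mul_apply_eq_comp, e2]; simp
  have hWf : (1 - τ • T2) ((τ ^ 2 • W) f) = τ ^ 2 • S (T2 f) := by
    have := congrArg (fun A : E →L[ℂ] E => τ ^ 2 • A f) hW
    simp only [mul_apply_eq_comp] at this
    rw [← this, ContinuousLinearMap.smul_apply, map_smul]
  rw [a1, a2]
  constructor
  · intro hh
    apply Vinj
    rw [hWf]
    have : (1 - τ • T2) f = f - τ • T2 f := by simp
    rw [this, eq_sub_iff_add_eq]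
    nth_rewrite 3 [hh]
    simp [pow_two, smul_smul, add_comm]
  · intro hh
    rw [hh] at hWf
    have : (1 - τ • T2) f = f - τ • T2 f := by simp
    rw [this, sub_eq_iff_eq_add] at hWf
    nth_rewrite 1 [hWf]
    simp [pow_two, smul_smul, add_comm]

variable {μ ν : Measure ℝ} [IsFiniteMeasure μ] [IsFiniteMeasure ν]

theorem ae_swap {Q : ℝ × ℝ → Prop} (hQ : ∀ᵐ z ∂(μ.prod ν), Q z) :
    ∀ᵐ y ∂ν, ∀ᵐ x ∂μ, Q (x, y) := by
  have := (Measure.measurePreserving_swap (μ := ν) (ν := μ)).quasiMeasurePreserving.ae hQ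
  exact Measure.ae_ae_of_ae_prod this

theorem ae_of_snd {Q : ℝ → Prop} (hQ : ∀ᵐ y ∂ν, Q y) : ∀ᵐ z ∂(μ.prod ν), Q z.2 :=
  Measure.quasiMeasurePreserving_snd.ae hQ

theorem slice_memLp (f : Lp ℂ 2 (μ.prod ν)) : ∀ᵐ y ∂ν, MemLp (fun s => f (s, y)) 2 μ := by
  have hf := Lp.memLp f
  have hi := (memLp_two_iff_integrable_sq_norm hf.1).1 hf
  filter_upwards [hi.prod_left_ae] with y hy
  refine (memLp_two_iff_integrable_sq_norm ?_).2 hy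
  exact ((Lp.stronglyMeasurable f).comp_measurable measurable_prodMk_right).aestronglyMeasurable

theorem star_mul_int {u v : ℝ → ℂ} (hu : MemLp u 2 μ) (hv : MemLp v 2 μ) :
    Integrable (fun s => star (u s) * v s) μ := by
  exact hu.star.integrable_mul hv

/-- coefficient -/
def cf (μ : Measure ℝ) (u : ℝ → ℂ) (f : ℝ × ℝ → ℂ) (y : ℝ) : ℂ := ∫ s, star (u s) * f (s, y) ∂μ

variable {n : ℕ} {φ : Fin n → ℝ → ℂ} {h : Fin n → ℝ → ℝ}

theorem T1_form (hφL2 : ∀ k, MemLp (φ k) 2 μ)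
    {T1 : Lp ℂ 2 (μ.prod ν) →L[ℂ] Lp ℂ 2 (μ.prod ν)}
    (hT1 : ∀ f : Lp ℂ 2 (μ.prod ν), ∀ᵐ z ∂(μ.prod ν),
        T1 f z = ∫ s, (∑ k, φ k z.1 * star (φ k s) * (h k z.2 : ℂ)) * f (s, z.2) ∂μ)
    (f : Lp ℂ 2 (μ.prod ν)) :
    ∀ᵐ z ∂(μ.prod ν), T1 f z = ∑ k, φ k z.1 * (h k z.2 : ℂ) * cf μ (φ k) f z.2 := by
  filter_upwards [hT1 f, ae_of_snd (μ := μ) (slice_memLp f)] with z hz hm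
  rw [hz]
  have : ∀ s, (∑ k, φ k z.1 * star (φ k s) * (h k z.2 : ℂ)) * f (s, z.2)
      = ∑ k, (φ k z.1 * (h k z.2 : ℂ)) * (star (φ k s) * f (s, z.2)) := by
    intro s
    rw [Finset.sum_mul]
    exact Finset.sum_congr rfl fun k _ => by ring
  simp_rw [this]
  rw [integral_finsetSum _ fun k _ => (star_mul_int (hφL2 k) hm).const_mul _]
  exact Finset.sum_congr rfl fun k _ => by rw [integral_const_mul, cf]

theorem cf_T1 (hφL2 : ∀ k, MemLp (φ k) 2 μ)
    (hφON : ∀ i j, ∫ x, star (φ i x) * φ j x ∂μ = if i = j then 1 else 0)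
    {T1 : Lp ℂ 2 (μ.prod ν) →L[ℂ] Lp ℂ 2 (μ.prod ν)}
    (hT1 : ∀ f : Lp ℂ 2 (μ.prod ν), ∀ᵐ z ∂(μ.prod ν),
        T1 f z = ∫ s, (∑ k, φ k z.1 * star (φ k s) * (h k z.2 : ℂ)) * f (s, z.2) ∂μ)
    (f : Lp ℂ 2 (μ.prod ν)) (k : Fin n) :
    ∀ᵐ y ∂ν, cf μ (φ k) (T1 f) y = (h k y : ℂ) * cf μ (φ k) f y := by
  filter_upwards [ae_swap (T1_form hφL2 hT1 f)] with y hy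
  have e : cf μ (φ k) (T1 f) y
      = ∫ s, ∑ j, ((h j y : ℂ) * cf μ (φ j) f y) * (star (φ k s) * φ j s) ∂μ := by
    apply integral_congr_ae
    filter_upwards [hy] with s hs
    rw [hs, Finset.mul_sum]
    exact Finset.sum_congr rfl fun k _ => by ring
  rw [e, integral_finsetSum _ fun j _ => (star_mul_int (hφL2 k) (hφL2 j)).const_mul _]
  simp_rw [integral_const_mul, hφON]
  simp

theorem nonvanish (hφL2 : ∀ k, MemLp (φ k) 2 μ)
    (hφON : ∀ i j, ∫ x, star (φ i x) * φ j x ∂μ = if i = j then 1 else 0)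
    (hhmeas : ∀ k, Measurable (h k))
    {T1 : Lp ℂ 2 (μ.prod ν) →L[ℂ] Lp ℂ 2 (μ.prod ν)}
    (hT1 : ∀ f : Lp ℂ 2 (μ.prod ν), ∀ᵐ z ∂(μ.prod ν),
        T1 f z = ∫ s, (∑ k, φ k z.1 * star (φ k s) * (h k z.2 : ℂ)) * f (s, z.2) ∂μ)
    (τ : ℂ) (h0 : τ ≠ 0) (h1 : τ⁻¹ ∈ resolventSet ℂ T1) (k : Fin n) :
    ∀ᵐ y ∂ν, 1 - τ * (h k y : ℂ) ≠ 0 := by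
  classical
  let A : Set ℝ := {y | 1 - τ * (h k y : ℂ) = 0}
  have hA : MeasurableSet A := by
    have : Measurable fun y => 1 - τ * (h k y : ℂ) := by
      have := hhmeas k
      fun_prop
    exact this (measurableSet_singleton 0)
  let χ : ℝ → ℂ := A.indicator fun _ => 1
  have hχ : MemLp χ 2 ν := (memLp_const 1).indicator hA
  have hF : MemLp (fun z : ℝ × ℝ => φ k z.1 * χ z.2) 2 (μ.prod ν) := by
    refine (memLp_two_iff_integrable_sq_norm ?_).2 ?_
    · exact ((hφL2 k).1.comp_fst).mul (hχ.1.comp_snd)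
    · have := ((memLp_two_iff_integrable_sq_norm (hφL2 k).1).1 (hφL2 k)).mul_prod
        ((memLp_two_iff_integrable_sq_norm hχ.1).1 hχ)
      simpa [mul_pow] using this
  let f := hF.toLp _
  have hf : ∀ᵐ z ∂(μ.prod ν), f z = φ k z.1 * χ z.2 := hF.coeFn_toLp
  have hc : ∀ᵐ y ∂ν, ∀ j, cf μ (φ j) f y = if j = k then χ y else 0 := by
    filter_upwards [ae_swap hf] with y hy j
    have : cf μ (φ j) f y = ∫ s, χ y * (star (φ j s) * φ k s) ∂μ := by
      apply integral_congr_ae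
      filter_upwards [hy] with s hs
      rw [hs]; ring
    rw [this, integral_const_mul, hφON]
    simp
  have hTf : T1 f = τ⁻¹ • f := by
    apply Lp.ext
    filter_upwards [T1_form hφL2 hT1 f, hf, ae_of_snd (μ := μ) hc, Lp.coeFn_smul τ⁻¹ f]
      with z hz hfz hcz hs
    rw [hz, hs, Pi.smul_apply, hfz]
    simp_rw [hcz]
    simp only [mul_ite, mul_zero, Finset.sum_ite_eq', Finset.mem_univ, if_true, smul_eq_mul]
    by_cases hzA : z.2 ∈ A
    · have : 1 - τ * (h k z.2 : ℂ) = 0 := hzA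
      have : (h k z.2 : ℂ) = τ⁻¹ := by
        exact eq_inv_of_mul_eq_one_left (by linear_combination -this)
      rw [this]; ring
    · simp [χ, hzA]
  have hf0 : f = 0 := by
    rw [spectrum.mem_resolventSet_iff] at h1
    obtain ⟨U, hU⟩ := h1
    have e : (U : Lp ℂ 2 (μ.prod ν) →L[ℂ] Lp ℂ 2 (μ.prod ν)) f = 0 := by
      rw [hU, Algebra.algebraMap_eq_smul_one]
      simp [hTf]
    have := congrArg ((U⁻¹ : (Lp ℂ 2 (μ.prod ν) →L[ℂ] Lp ℂ 2 (μ.prod ν))ˣ) :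
      Lp ℂ 2 (μ.prod ν) →L[ℂ] Lp ℂ 2 (μ.prod ν)) e
    rw [← mul_apply_eq_comp, U.inv_mul] at this
    simpa using this
  have hz : ∀ᵐ z ∂(μ.prod ν), f z = 0 := by
    rw [hf0]; exact Lp.coeFn_zero _ _ _
  filter_upwards [hc, ae_swap hz] with y hy hy0 hyA
  have e1 := hy k
  have : cf μ (φ k) f y = 0 := by
    apply integral_eq_zero_of_ae
    filter_upwards [hy0] with s hs
    simp [hs]
  rw [this, if_pos rfl] at e1
  have hyA' : y ∈ A := hyA
  simp [χ, hyA'] at e1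

theorem S_eq (hφL2 : ∀ k, MemLp (φ k) 2 μ)
    (hφON : ∀ i j, ∫ x, star (φ i x) * φ j x ∂μ = if i = j then 1 else 0)
    (hhmeas : ∀ k, Measurable (h k))
    {T1 S : Lp ℂ 2 (μ.prod ν) →L[ℂ] Lp ℂ 2 (μ.prod ν)}
    (hT1 : ∀ f : Lp ℂ 2 (μ.prod ν), ∀ᵐ z ∂(μ.prod ν),
        T1 f z = ∫ s, (∑ k, φ k z.1 * star (φ k s) * (h k z.2 : ℂ)) * f (s, z.2) ∂μ)
    (P : Fin n → (Lp ℂ 2 (μ.prod ν) →L[ℂ] Lp ℂ 2 (μ.prod ν)))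
    (hP : ∀ k, ∀ f : Lp ℂ 2 (μ.prod ν), ∀ᵐ z ∂(μ.prod ν),
        P k f z = φ k z.1 * ∫ s, star (φ k s) * f (s, z.2) ∂μ)
    (τ : ℂ) (h0 : τ ≠ 0) (h1 : τ⁻¹ ∈ resolventSet ℂ T1)
    (hS : ∀ f : Lp ℂ 2 (μ.prod ν), ∀ᵐ z ∂(μ.prod ν),
          S f z = ∑ k, ((h k z.2 : ℂ) / (1 - τ * (h k z.2 : ℂ))) * P k f z) :
    S = T1 + τ • (S * T1) := by
  ext1 f
  apply Lp.ext
  have hP1 : ∀ᵐ z ∂(μ.prod ν), ∀ k, P k f z = φ k z.1 * cf μ (φ k) f z.2 :=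
    ae_all_iff.2 fun k => hP k f
  have hP2 : ∀ᵐ z ∂(μ.prod ν), ∀ k, P k (T1 f) z = φ k z.1 * cf μ (φ k) (T1 f) z.2 :=
    ae_all_iff.2 fun k => hP k (T1 f)
  have hc : ∀ᵐ z ∂(μ.prod ν), ∀ k,
      cf μ (φ k) (T1 f) z.2 = (h k z.2 : ℂ) * cf μ (φ k) f z.2 :=
    ae_all_iff.2 fun k => ae_of_snd (cf_T1 hφL2 hφON hT1 f k)
  have hn : ∀ᵐ z ∂(μ.prod ν), ∀ k, 1 - τ * (h k z.2 : ℂ) ≠ 0 :=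
    ae_all_iff.2 fun k => ae_of_snd (nonvanish hφL2 hφON hhmeas hT1 τ h0 h1 k)
  have e : (T1 + τ • (S * T1)) f = T1 f + τ • S (T1 f) := by simp
  rw [e]
  filter_upwards [hP1, hP2, hc, hn, hS f, hS (T1 f), T1_form hφL2 hT1 f,
    Lp.coeFn_add (T1 f) (τ • S (T1 f)), Lp.coeFn_smul τ (S (T1 f))]
    with z p1 p2 c1 n1 s1 s2 t1 a1 m1
  rw [a1, Pi.add_apply, m1, Pi.smul_apply, s1, s2, t1, smul_eq_mul, Finset.mul_sum,
    ← Finset.sum_add_distrib]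
  refine Finset.sum_congr rfl fun k _ => ?_
  rw [p1, p2, c1]
  have hk := n1 k
  generalize (h k z.2 : ℂ) = w at hk ⊢
  generalize cf μ (φ k) f z.2 = q
  have e3 : w / (1 - τ * w) = w + τ * w * (w / (1 - τ * w)) := by
    have e4 : w / (1 - τ * w) * (1 - τ * w) = w := div_mul_cancel₀ _ hk
    linear_combination e4
  linear_combination (φ k z.1 * q) * e3

end helpers

theorem statement9
    (a b c d : ℝ) (hab : a < b) (hcd : c < d)
    (n : ℕ) (hn : 1 ≤ n)
    (φ : Fin n → ℝ → ℂ)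
    (hφL2 : ∀ k, MemLp (φ k) 2 (muI a b))
    (hφON : ∀ i j, ∫ x, star (φ i x) * φ j x ∂(muI a b) = if i = j then 1 else 0)
    (h : Fin n → ℝ → ℝ)
    (hhmeas : ∀ k, Measurable (h k))
    (hhbdd : ∀ k, ∃ C : ℝ, ∀ᵐ y ∂(muI c d), |h k y| ≤ C)
    (m : ℕ) (hm : 1 ≤ m)
    (ψ : Fin m → ℝ → ℂ)
    (hψL2 : ∀ j, MemLp (ψ j) 2 (muI c d))
    (hψON : ∀ i j, ∫ y, star (ψ i y) * ψ j y ∂(muI c d) = if i = j then 1 else 0)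
    (p : Fin m → ℝ → ℝ)
    (hpmeas : ∀ j, Measurable (p j))
    (hpbdd : ∀ j, ∃ C : ℝ, ∀ᵐ x ∂(muI a b), |p j x| ≤ C)
    (T1 T2 : Lp ℂ 2 ((muI a b).prod (muI c d)) →L[ℂ] Lp ℂ 2 ((muI a b).prod (muI c d)))
    (hT1sa : IsSelfAdjoint T1) (hT2sa : IsSelfAdjoint T2)
    (hT1 : ∀ f : Lp ℂ 2 ((muI a b).prod (muI c d)),
      ∀ᵐ z ∂((muI a b).prod (muI c d)),
        T1 f z = ∫ s, (∑ k, φ k z.1 * star (φ k s) * (h k z.2 : ℂ)) * f (s, z.2) ∂(muI a b))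
    (hT2 : ∀ f : Lp ℂ 2 ((muI a b).prod (muI c d)),
      ∀ᵐ z ∂((muI a b).prod (muI c d)),
        T2 f z = ∫ t, (∑ j, (p j z.1 : ℂ) * ψ j z.2 * star (ψ j t)) * f (z.1, t) ∂(muI c d))
    -- the orthogonal projections `P k`
    (P : Fin n → (Lp ℂ 2 ((muI a b).prod (muI c d)) →L[ℂ] Lp ℂ 2 ((muI a b).prod (muI c d))))
    (hP : ∀ k, ∀ f : Lp ℂ 2 ((muI a b).prod (muI c d)),
      ∀ᵐ z ∂((muI a b).prod (muI c d)),
        P k f z = φ k z.1 * ∫ s, star (φ k s) * f (s, z.2) ∂(muI a b))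
    -- the operators S₁(τ)
    (S1 : ℂ → (Lp ℂ 2 ((muI a b).prod (muI c d)) →L[ℂ] Lp ℂ 2 ((muI a b).prod (muI c d))))
    (hS1 : ∀ τ : ℂ, τ ≠ 0 → τ⁻¹ ∈ resolventSet ℂ T1 → τ⁻¹ ∈ resolventSet ℂ T2 →
      ∀ f : Lp ℂ 2 ((muI a b).prod (muI c d)),
        ∀ᵐ z ∂((muI a b).prod (muI c d)),
          S1 τ f z = ∑ k, ((h k z.2 : ℂ) / (1 - τ * (h k z.2 : ℂ))) * P k f z)
    -- the operators W₁(τ) = (E-τT₂)⁻¹ S₁(τ) T₂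
    (W1 : ℂ → (Lp ℂ 2 ((muI a b).prod (muI c d)) →L[ℂ] Lp ℂ 2 ((muI a b).prod (muI c d))))
    (hW1 : ∀ τ : ℂ, τ ≠ 0 → τ⁻¹ ∈ resolventSet ℂ T1 → τ⁻¹ ∈ resolventSet ℂ T2 →
      (1 - τ • T2) * W1 τ = S1 τ * T2)
    -- the sets D(T) and R(T)
    (DT RT : Set ℂ)
    (hDT : DT = {τ : ℂ | τ ≠ 0 ∧ τ⁻¹ ∈ resolventSet ℂ T1 ∧ τ⁻¹ ∈ resolventSet ℂ T2 ∧
      ∃ g : Lp ℂ 2 ((muI a b).prod (muI c d)), g ≠ 0 ∧ (τ ^ 2 • W1 τ) g = g})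
    (hRT : RT = {τ : ℂ | τ ≠ 0 ∧ τ⁻¹ ∈ resolventSet ℂ T1 ∧ τ⁻¹ ∈ resolventSet ℂ T2 ∧
      ¬ ∃ g : Lp ℂ 2 ((muI a b).prod (muI c d)), g ≠ 0 ∧ (τ ^ 2 • W1 τ) g = g}) :
    ∀ τ ∈ RT ∪ DT,
      ((∃ f : Lp ℂ 2 ((muI a b).prod (muI c d)), f ≠ 0 ∧ f - τ • (T1 + T2) f = 0) ↔
        τ ∈ DT) := by
  intro τ hτ
  have hr : τ ≠ 0 ∧ τ⁻¹ ∈ resolventSet ℂ T1 ∧ τ⁻¹ ∈ resolventSet ℂ T2 := by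
    rw [hDT, hRT] at hτ
    rcases hτ with hh | hh
    · exact ⟨hh.1, hh.2.1, hh.2.2.1⟩
    · exact ⟨hh.1, hh.2.1, hh.2.2.1⟩
  obtain ⟨h0, h1, h2⟩ := hr
  have hS := S_eq hφL2 hφON hhmeas hT1 P hP τ h0 h1 (hS1 τ h0 h1 h2)
  have key := abs_aux T1 T2 (S1 τ) (W1 τ) τ h0 h1 h2 hS (hW1 τ h0 h1 h2)
  rw [hDT]
  constructor
  · rintro ⟨f, hf, he⟩
    exact ⟨h0, h1, h2, f, hf, (key f).1 he⟩
  · rintro ⟨-, -, -, f, hf, he⟩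
    exact ⟨f, hf, (key f).2 he⟩
end
end
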